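/- arXiv:1603.06493 — 5 statements merged into one kernel-verified Lean document; each statement's English description precedes it below -/
import Mathlib

section
/- In the sequence setup described in the context, for every a > 0 one has |{x ∈ Ω : v_n(x) > ε_n} ∩ {x ∈ Ω : g_n(x) > a}| → 0 as n → ∞. -/
/-!
Let `h = ∑ i, u_i |f_i| ^ p`, so that `v = h / g` where `g ≠ 0`.

If `u ≠ 0` and the principal minors of `A` do not vanish, then some index `i` has `u_i ≠ 0` and
`(A u)_i ≠ 0`; by compactness, `i` can be chosen so that `u_i` and `|(A u)_i|` are both at least
`δ ‖u‖`, with `δ` uniform. When `‖u‖` is large, `|f_i|` is then comparable to `‖f‖`, so `h ≤ g`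
forces `u_i`, hence `‖u‖`, to be bounded. Therefore `g ≤ C` wherever `h ≤ g`, with `C` independent
of the point and of the sequence.

Integrating `ε g < h` over `T = {ε g < h}` and using `∫ h ≤ ε² ∫ g` gives `∫_T g ≤ ε ∫ g`, while
`g ≤ C` off `T`. Thus `∫ g` is bounded once `ε ≤ 1 / 2`, so `∫_T g = O(ε)`, and Markov's inequality
concludes.
-/

open MeasureTheory Filter

/-- Principal minor of `A` over the index set `I`. -/
noncomputable def minorP {N : ℕ} (A : Matrix (Fin N) (Fin N) ℝ) (I : Finset (Fin N)) : ℝ :=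
  Matrix.det (Matrix.of fun i j : {x : Fin N // x ∈ I} => A i.1 j.1)

/-- The determinant `Δ_{I,j}` obtained by bordering the principal minor over `I`
with the column `m` and the row `j`. -/
noncomputable def minorM {N : ℕ} (A : Matrix (Fin N) (Fin N) ℝ) (m : Fin N → ℝ)
    (I : Finset (Fin N)) (j : Fin N) : ℝ :=
  Matrix.det (Matrix.of fun k l : Option {x : Fin N // x ∈ I} =>
    match k, l with
    | some k', some l' => A k'.1 l'.1
    | some k', none => m k'.1
    | none, some l' => A j l'.1
    | none, none => m j)

/-- An admissible pair of coefficients with constant `κ`: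
entries of `A` and `m` bounded by `1/κ`, all principal minors `Δ_I ≥ κ`,
and all bordered determinants `Δ_{I,j} ≥ κ` for `j ∉ I`. -/
def IsAdmissible {N : ℕ} (κ : ℝ) (A : Matrix (Fin N) (Fin N) ℝ) (m : Fin N → ℝ) : Prop :=
  (∀ i j, |A i j| ≤ 1 / κ) ∧ (∀ i, m i ≤ 1 / κ) ∧
    (∀ I : Finset (Fin N), κ ≤ minorP A I) ∧
    (∀ I : Finset (Fin N), ∀ j ∉ I, κ ≤ minorM A m I j)

/-- `f_i(u) = m_i − Σ_j a_{ij} u_j`. -/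
def fComp {N : ℕ} (A : Matrix (Fin N) (Fin N) ℝ) (m : Fin N → ℝ) (u : Fin N → ℝ)
    (i : Fin N) : ℝ :=
  m i - ∑ j, A i j * u j

/-- Pointwise `f_{i}(x) = m_i(x) − Σ_j a_{ij}(x) u_j(x)` for coefficient fields on `ℝ^d`. -/
noncomputable def fSeq {d N : ℕ} (A : (Fin d → ℝ) → Matrix (Fin N) (Fin N) ℝ)
    (m : (Fin d → ℝ) → Fin N → ℝ) (u : (Fin d → ℝ) → Fin N → ℝ)
    (x : Fin d → ℝ) (i : Fin N) : ℝ :=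
  m x i - ∑ j, A x i j * u x j

/-- Pointwise `g(x) = Σ_i |f_i(x)|^p`. -/
noncomputable def gSeq {d N : ℕ} (A : (Fin d → ℝ) → Matrix (Fin N) (Fin N) ℝ)
    (m : (Fin d → ℝ) → Fin N → ℝ) (u : (Fin d → ℝ) → Fin N → ℝ)
    (p : ℝ) (x : Fin d → ℝ) : ℝ :=
  ∑ i, |fSeq A m u x i| ^ p

/-- Pointwise `v(x) = g(x)⁻¹ Σ_i u_i(x) |f_i(x)|^p` when `g(x) ≠ 0`, and
`v(x) = min_i u_i(x)` when `g(x) = 0`. -/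
noncomputable def vSeq {d N : ℕ} (A : (Fin d → ℝ) → Matrix (Fin N) (Fin N) ℝ)
    (m : (Fin d → ℝ) → Fin N → ℝ) (u : (Fin d → ℝ) → Fin N → ℝ)
    (p : ℝ) (x : Fin d → ℝ) : ℝ :=
  if gSeq A m u p x = 0 then ⨅ i, u x i
  else (∑ i, u x i * |fSeq A m u x i| ^ p) / gSeq A m u p x

open scoped ENNReal Topology Matrix

section NonvanishingPrincipalMinors

/-- All principal minors of `A`, including `det A` itself, are nonzero. The index set of a minor is
a `Finset`, so that the rows and columns kept are indexed by its coercion to a type. -/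
def PrincipalMinorsNeZero {n R : Type*} [DecidableEq n] [CommRing R] (A : Matrix n n R) : Prop :=
  ∀ s : Finset n, (A.submatrix ((↑) : s → n) (↑)).det ≠ 0

variable {n : Type*}

lemma isCompact_setOf_abs_le_and_le_det_submatrix [DecidableEq n] (B κ : ℝ) :
    IsCompact {A : Matrix n n ℝ | (∀ i j, |A i j| ≤ B) ∧
      ∀ s : Finset n, κ ≤ (A.submatrix ((↑) : s → n) (↑)).det} := by
  have hbox : IsCompact {A : Matrix n n ℝ | ∀ i j, |A i j| ≤ B} := by
    simpa only [Set.matrix, Set.mem_Icc, ← abs_le] using (isCompact_Icc (a := -B) (b := B)).matrix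
  have hminor : IsClosed {A : Matrix n n ℝ |
      ∀ s : Finset n, κ ≤ (A.submatrix ((↑) : s → n) (↑)).det} := by
    simp only [Set.ofPred_forall]
    exact isClosed_iInter fun s ↦ isClosed_le continuous_const
      (continuous_id.matrix_submatrix _ _).matrix_det
  exact hbox.inter_right hminor

variable [Fintype n]

lemma exists_pos_forall_norm_mulVec_le_of_isCompact {l R : Type*} [Fintype l]
    [NonUnitalSeminormedRing R] {K : Set (Matrix l n R)} (hK : IsCompact K) :
    ∃ L > 0, ∀ A ∈ K, ∀ u : n → R, ‖A *ᵥ u‖ ≤ L * ‖u‖ := by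
  let _ : SeminormedAddCommGroup (Matrix l n R) := Matrix.linftyOpSeminormedAddCommGroup
  obtain ⟨L, hL, hKL⟩ := hK.isBounded.exists_pos_norm_le
  exact ⟨L, hL, fun A hA u ↦ (Matrix.linfty_opNorm_mulVec A u).trans (by gcongr; exact hKL A hA)⟩

variable [DecidableEq n]

-- If the claim failed, the principal submatrix on the support of `u` would annihilate `u`.
lemma PrincipalMinorsNeZero.exists_ne_zero_and_mulVec_ne_zero {R : Type*} [CommRing R] [IsDomain R]
    {A : Matrix n n R} (hA : PrincipalMinorsNeZero A) {u : n → R} (hu : u ≠ 0) :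
    ∃ i, u i ≠ 0 ∧ (A *ᵥ u) i ≠ 0 := by
  classical
  by_contra! h
  let s : Finset n := {i | u i ≠ 0}
  have hs : ∀ i, i ∈ s ↔ u i ≠ 0 := by simp [s]
  have hker : A.submatrix ((↑) : s → n) (↑) *ᵥ (fun i : s ↦ u i) = 0 := by
    ext i
    calc ∑ j : s, A i j * u j
        = ∑ j ∈ s, A i j * u j := Finset.sum_coe_sort s fun j ↦ A i j * u j
      _ = (A *ᵥ u) i := Finset.sum_subset s.subset_univ fun j _ hj ↦ by
          rw [not_not.mp (mt (hs j).mpr hj), mul_zero]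
      _ = 0 := h i ((hs i).mp i.2)
  refine hu (funext fun i ↦ by_contra fun hi ↦ hi ?_)
  exact congrFun (Matrix.eq_zero_of_mulVec_eq_zero (hA s) hker) ⟨i, (hs i).mpr hi⟩

lemma exists_pos_forall_mul_norm_le_of_isCompact {𝕜 : Type*} [RCLike 𝕜]
    {K : Set (Matrix n n 𝕜)} (hK : IsCompact K) (hminor : ∀ A ∈ K, PrincipalMinorsNeZero A) :
    ∃ δ > 0, ∀ A ∈ K, ∀ u : n → 𝕜, u ≠ 0 →
      ∃ i, δ * ‖u‖ ≤ ‖u i‖ ∧ δ * ‖u‖ ≤ ‖(A *ᵥ u) i‖ := by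
  let φ : Matrix n n 𝕜 × (n → 𝕜) → n → ℝ := fun q i ↦ min ‖q.2 i‖ ‖(q.1 *ᵥ q.2) i‖
  have hφ : Continuous φ := by
    have : Continuous fun q : Matrix n n 𝕜 × (n → 𝕜) ↦ q.1 *ᵥ q.2 :=
      continuous_fst.matrix_mulVec continuous_snd
    fun_prop
  obtain ⟨δ, hδ, hle⟩ := (hK.prod (isCompact_sphere (0 : n → 𝕜) 1)).exists_forall_le'
    hφ.norm.continuousOn (a := 0) (by
      rintro ⟨A, w⟩ ⟨hA, hw⟩
      obtain ⟨i, hi, hAi⟩ := (hminor A hA).exists_ne_zero_and_mulVec_ne_zero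
        (ne_zero_of_mem_unit_sphere ⟨w, hw⟩)
      refine norm_pos_iff.mpr fun h0 ↦ ?_
      exact (lt_min (norm_pos_iff.mpr hi) (norm_pos_iff.mpr hAi)).ne' (congrFun h0 i))
  refine ⟨δ, hδ, fun A hA u hu ↦ ?_⟩
  have hu_pos : 0 < ‖u‖ := norm_pos_iff.mpr hu
  set w : n → 𝕜 := (‖u‖⁻¹ : 𝕜) • u with hw
  have hδw : δ ≤ ‖φ (A, w)‖ :=
    hle (A, w) ⟨hA, mem_sphere_zero_iff_norm.mpr (norm_smul_inv_norm hu)⟩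
  obtain ⟨i, hi⟩ : ∃ i, δ ≤ min ‖w i‖ ‖(A *ᵥ w) i‖ := by
    by_contra! hlt
    refine hδw.not_gt ((pi_norm_lt_iff hδ).mpr fun i ↦ ?_)
    rw [Real.norm_of_nonneg (le_min (norm_nonneg _) (norm_nonneg _))]
    exact hlt i
  have hscale : ∀ z : 𝕜, δ ≤ ‖(‖u‖⁻¹ : 𝕜) * z‖ → δ * ‖u‖ ≤ ‖z‖ := fun z hz ↦ by
    rwa [norm_mul, norm_inv, RCLike.norm_ofReal, abs_of_pos hu_pos, ← div_eq_inv_mul,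
      le_div_iff₀ hu_pos] at hz
  rw [hw, Matrix.mulVec_smul] at hi
  exact ⟨i, hscale _ (hi.trans (min_le_left _ _)), hscale _ (hi.trans (min_le_right _ _))⟩

end NonvanishingPrincipalMinors

section WeightedPowerSums

variable {n : Type*} [Fintype n]

/-- The sum `∑ i, |f i| ^ p`, that is `gSeq` at a point where the values `f_i` are `f`. -/
noncomputable def absPowSum (p : ℝ) (f : n → ℝ) : ℝ :=
  ∑ i, |f i| ^ p

/-- The sum `∑ i, w i * |f i| ^ p`, that is the numerator of `vSeq` at a point where the values
`u_i` and `f_i` are `w` and `f`. -/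
noncomputable def weightedAbsPowSum (p : ℝ) (w f : n → ℝ) : ℝ :=
  ∑ i, w i * |f i| ^ p

variable {p c : ℝ} {w f : n → ℝ}

lemma absPowSum_nonneg (p : ℝ) (f : n → ℝ) : 0 ≤ absPowSum p f :=
  Finset.sum_nonneg fun _ _ ↦ by positivity

lemma measurable_absPowSum (p : ℝ) : Measurable (absPowSum p : (n → ℝ) → ℝ) := by
  unfold absPowSum
  fun_prop

lemma measurable_weightedAbsPowSum (p : ℝ) :
    Measurable fun q : (n → ℝ) × (n → ℝ) ↦ weightedAbsPowSum p q.1 q.2 := by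
  unfold weightedAbsPowSum
  fun_prop

lemma absPowSum_le_of_norm_le (hp : 0 ≤ p) (hf : ‖f‖ ≤ c) :
    absPowSum p f ≤ Fintype.card n * c ^ p :=
  calc absPowSum p f ≤ ∑ _i : n, c ^ p :=
        Finset.sum_le_sum fun i _ ↦
          Real.rpow_le_rpow (abs_nonneg _) ((norm_le_pi_norm f i).trans hf) hp
    _ = Fintype.card n * c ^ p := by rw [Finset.sum_const, Finset.card_univ, nsmul_eq_mul]

lemma mul_rpow_le_weightedAbsPowSum (hw : 0 ≤ w) (i : n) :
    w i * |f i| ^ p ≤ weightedAbsPowSum p w f :=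
  Finset.single_le_sum (f := fun i ↦ w i * |f i| ^ p)
    (fun j _ ↦ mul_nonneg (hw j) (by positivity)) (Finset.mem_univ i)

lemma weight_le_of_weightedAbsPowSum_le_absPowSum (hp : 0 ≤ p) (hc : 0 ≤ c) (hw : 0 ≤ w)
    (hle : weightedAbsPowSum p w f ≤ absPowSum p f) {i : n} (hi : f i ≠ 0)
    (hfi : ‖f‖ ≤ c * |f i|) : w i ≤ Fintype.card n * c ^ p := by
  have hpos : 0 < |f i| ^ p := Real.rpow_pos_of_pos (abs_pos.mpr hi) p
  refine le_of_mul_le_mul_right ?_ hpos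
  calc w i * |f i| ^ p ≤ weightedAbsPowSum p w f := mul_rpow_le_weightedAbsPowSum hw i
    _ ≤ absPowSum p f := hle
    _ ≤ Fintype.card n * (c * |f i|) ^ p := absPowSum_le_of_norm_le hp hfi
    _ = Fintype.card n * c ^ p * |f i| ^ p := by
        rw [Real.mul_rpow hc (abs_nonneg _), mul_assoc]

end WeightedPowerSums

section PointwiseBound

variable {n : Type*} [Fintype n] [DecidableEq n] {K : Set (Matrix n n ℝ)} {p : ℝ}

lemma exists_norm_le_of_weightedAbsPowSum_le_absPowSum (hK : IsCompact K)
    (hminor : ∀ A ∈ K, PrincipalMinorsNeZero A) (hp : 0 ≤ p) (M : ℝ) :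
    ∃ R, ∀ A ∈ K, ∀ m u : n → ℝ, ‖m‖ ≤ M → 0 ≤ u →
      weightedAbsPowSum p u (m - A *ᵥ u) ≤ absPowSum p (m - A *ᵥ u) → ‖u‖ ≤ R := by
  obtain ⟨δ, hδ, hdom⟩ := exists_pos_forall_mul_norm_le_of_isCompact hK hminor
  obtain ⟨L, hL, hnorm⟩ := exists_pos_forall_norm_mulVec_le_of_isCompact hK
  set c : ℝ := 1 + 2 * L / δ with hc
  refine ⟨max (2 * M / δ) (Fintype.card n * c ^ p / δ), fun A hA m u hm hu hle ↦ ?_⟩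
  rw [le_max_iff, or_iff_not_imp_left, not_le]
  intro hlarge
  have hM : M < δ / 2 * ‖u‖ := by
    rw [div_lt_iff₀ hδ] at hlarge
    linarith
  have hu_pos : 0 < ‖u‖ := by nlinarith [norm_nonneg m, norm_nonneg u]
  obtain ⟨i, hui, hAui⟩ := hdom A hA u (norm_pos_iff.mp hu_pos)
  set f : n → ℝ := m - A *ᵥ u with hf
  have hfi : δ / 2 * ‖u‖ ≤ |f i| := by
    have h₁ : ‖(A *ᵥ u) i‖ - ‖m i‖ ≤ |f i| := by
      rw [hf, Pi.sub_apply, abs_sub_comm]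
      exact abs_sub_abs_le_abs_sub _ _
    linarith [norm_le_pi_norm m i]
  have hfnorm : ‖f‖ ≤ c * |f i| :=
    calc ‖f‖ ≤ ‖m‖ + ‖A *ᵥ u‖ := norm_sub_le _ _
      _ ≤ δ / 2 * ‖u‖ + L * ‖u‖ := add_le_add (hm.trans hM.le) (hnorm A hA u)
      _ = c * (δ / 2 * ‖u‖) := by rw [hc]; field_simp
      _ ≤ c * |f i| := by gcongr
  have hfi_ne : f i ≠ 0 := abs_pos.mp ((by positivity : 0 < δ / 2 * ‖u‖).trans_le hfi)
  rw [le_div_iff₀' hδ]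
  calc δ * ‖u‖ ≤ u i := hui.trans_eq (Real.norm_of_nonneg (hu i))
    _ ≤ Fintype.card n * c ^ p :=
        weight_le_of_weightedAbsPowSum_le_absPowSum hp (by positivity) hu hle hfi_ne hfnorm

lemma exists_absPowSum_le_of_weightedAbsPowSum_le (hK : IsCompact K)
    (hminor : ∀ A ∈ K, PrincipalMinorsNeZero A) (hp : 0 ≤ p) (M : ℝ) :
    ∃ C, ∀ A ∈ K, ∀ m u : n → ℝ, ‖m‖ ≤ M → 0 ≤ u →
      weightedAbsPowSum p u (m - A *ᵥ u) ≤ absPowSum p (m - A *ᵥ u) →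
      absPowSum p (m - A *ᵥ u) ≤ C := by
  obtain ⟨R, hR⟩ := exists_norm_le_of_weightedAbsPowSum_le_absPowSum hK hminor hp M
  obtain ⟨L, hL, hnorm⟩ := exists_pos_forall_norm_mulVec_le_of_isCompact hK
  refine ⟨Fintype.card n * (M + L * R) ^ p, fun A hA m u hm hu hle ↦ ?_⟩
  have huR : ‖u‖ ≤ R := hR A hA m u hm hu hle
  refine absPowSum_le_of_norm_le hp ((norm_sub_le _ _).trans (add_le_add hm ?_))
  exact (hnorm A hA u).trans (by gcongr)

end PointwiseBound

section Concentration

variable {α : Type*} [MeasurableSpace α] {μ : Measure α} {g h : α → ℝ≥0∞} {ε C a : ℝ≥0∞}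

lemma setLIntegral_mul_lt_le_of_lintegral_le_sq_mul (hg : Measurable g) (hh : Measurable h)
    (hε₀ : ε ≠ 0) (hε : ε ≠ ∞) (hint : ∫⁻ x, h x ∂μ ≤ ε ^ 2 * ∫⁻ x, g x ∂μ) :
    ∫⁻ x in {x | ε * g x < h x}, g x ∂μ ≤ ε * ∫⁻ x, g x ∂μ := by
  refine (ENNReal.mul_le_mul_iff_right hε₀ hε).mp ?_
  calc ε * ∫⁻ x in {x | ε * g x < h x}, g x ∂μ
      = ∫⁻ x in {x | ε * g x < h x}, ε * g x ∂μ := (lintegral_const_mul' ε _ hε).symm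
    _ ≤ ∫⁻ x in {x | ε * g x < h x}, h x ∂μ :=
        setLIntegral_mono' (measurableSet_lt (hg.const_mul ε) hh) fun _ hx ↦ le_of_lt hx
    _ ≤ ∫⁻ x, h x ∂μ := setLIntegral_le_lintegral _ _
    _ ≤ ε * (ε * ∫⁻ x, g x ∂μ) := by rwa [← mul_assoc, ← sq]

lemma lintegral_le_two_mul_of_lintegral_le_sq_mul (hg : Measurable g) (hh : Measurable h)
    (hε₀ : ε ≠ 0) (hε : ε ≤ 2⁻¹) (hC : ∀ᵐ x ∂μ, h x ≤ g x → g x ≤ C) (hfin : ∫⁻ x, g x ∂μ ≠ ∞)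
    (hint : ∫⁻ x, h x ∂μ ≤ ε ^ 2 * ∫⁻ x, g x ∂μ) :
    ∫⁻ x, g x ∂μ ≤ 2 * (C * μ Set.univ) := by
  set T : Set α := {x | ε * g x < h x}
  have hT : MeasurableSet T := measurableSet_lt (hg.const_mul ε) hh
  have hε_top : ε ≠ ∞ := ne_top_of_le_ne_top (by simp) hε
  have hcompl : ∫⁻ x in Tᶜ, g x ∂μ ≤ C * μ Set.univ :=
    calc ∫⁻ x in Tᶜ, g x ∂μ ≤ ∫⁻ _ in Tᶜ, C ∂μ := by
          refine setLIntegral_mono_ae' hT.compl (hC.mono fun x hx hxT ↦ hx ?_)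
          have hhx : h x ≤ ε * g x := not_lt.mp hxT
          exact hhx.trans (mul_le_of_le_one_left' (hε.trans (by simp)))
      _ ≤ C * μ Set.univ := by
          rw [setLIntegral_const]
          gcongr
          exact Set.subset_univ _
  have hhalf : 2⁻¹ * ∫⁻ x, g x ∂μ + 2⁻¹ * ∫⁻ x, g x ∂μ ≤
      2⁻¹ * ∫⁻ x, g x ∂μ + C * μ Set.univ := by
    calc 2⁻¹ * ∫⁻ x, g x ∂μ + 2⁻¹ * ∫⁻ x, g x ∂μ = ∫⁻ x, g x ∂μ := by
          rw [← add_mul, ENNReal.inv_two_add_inv_two, one_mul]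
      _ = ∫⁻ x in T, g x ∂μ + ∫⁻ x in Tᶜ, g x ∂μ := (lintegral_add_compl g hT).symm
      _ ≤ 2⁻¹ * ∫⁻ x, g x ∂μ + C * μ Set.univ :=
          add_le_add
            ((setLIntegral_mul_lt_le_of_lintegral_le_sq_mul hg hh hε₀ hε_top hint).trans
              (by gcongr))
            hcompl
  have hle := (ENNReal.add_le_add_iff_left (ENNReal.mul_ne_top (by simp) hfin)).mp hhalf
  rwa [← ENNReal.div_eq_inv_mul, ENNReal.div_le_iff' (by simp) (by simp)] at hle

lemma measure_mul_lt_and_lt_le (hg : Measurable g) (hh : Measurable h) (hε₀ : ε ≠ 0)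
    (hε : ε ≤ 2⁻¹) (hC : ∀ᵐ x ∂μ, h x ≤ g x → g x ≤ C) (hfin : ∫⁻ x, g x ∂μ ≠ ∞)
    (hint : ∫⁻ x, h x ∂μ ≤ ε ^ 2 * ∫⁻ x, g x ∂μ) (ha₀ : a ≠ 0) (ha : a ≠ ∞) :
    μ {x | ε * g x < h x ∧ a < g x} ≤ ε * (2 * (C * μ Set.univ) / a) := by
  set T : Set α := {x | ε * g x < h x}
  have hε_top : ε ≠ ∞ := ne_top_of_le_ne_top (by simp) hε
  calc μ {x | ε * g x < h x ∧ a < g x}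
      ≤ μ.restrict T {x | a ≤ g x} := by
        rw [Measure.restrict_apply (measurableSet_le measurable_const hg)]
        exact measure_mono fun x hx ↦ ⟨hx.2.le, hx.1⟩
    _ ≤ (∫⁻ x in T, g x ∂μ) / a := meas_ge_le_lintegral_div hg.aemeasurable ha₀ ha
    _ ≤ ε * (2 * (C * μ Set.univ)) / a := by
        gcongr
        refine (setLIntegral_mul_lt_le_of_lintegral_le_sq_mul hg hh hε₀ hε_top hint).trans ?_
        gcongr
        exact lintegral_le_two_mul_of_lintegral_le_sq_mul hg hh hε₀ hε hC hfin hint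
    _ = ε * (2 * (C * μ Set.univ) / a) := mul_div_assoc _ _ _

lemma tendsto_measure_mul_lt_and_lt [IsFiniteMeasure μ] {β : Type*} {l : Filter β}
    {g h : β → α → ℝ≥0∞} {ε : β → ℝ≥0∞} (hg : ∀ n, Measurable (g n)) (hh : ∀ n, Measurable (h n))
    (hε₀ : ∀ n, ε n ≠ 0) (hε : Tendsto ε l (𝓝 0)) (hC_top : C ≠ ∞)
    (hC : ∀ n, ∀ᵐ x ∂μ, h n x ≤ g n x → g n x ≤ C) (hfin : ∀ n, ∫⁻ x, g n x ∂μ ≠ ∞)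
    (hint : ∀ n, ∫⁻ x, h n x ∂μ ≤ ε n ^ 2 * ∫⁻ x, g n x ∂μ) (ha₀ : a ≠ 0) (ha : a ≠ ∞) :
    Tendsto (fun n ↦ μ {x | ε n * g n x < h n x ∧ a < g n x}) l (𝓝 0) := by
  have hbound : Tendsto (fun n ↦ ε n * (2 * (C * μ Set.univ) / a)) l (𝓝 0) := by
    have hconst : 2 * (C * μ Set.univ) / a ≠ ∞ := by finiteness
    simpa only [zero_mul] using ENNReal.Tendsto.mul_const hε (Or.inr hconst)
  refine tendsto_of_tendsto_of_tendsto_of_le_of_le' tendsto_const_nhds hbound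
    (Eventually.of_forall fun _ ↦ zero_le) ?_
  filter_upwards [hε.eventually (eventually_le_nhds (by simp : (0 : ℝ≥0∞) < 2⁻¹))] with n hn
  exact measure_mul_lt_and_lt_le (hg n) (hh n) (hε₀ n) hn (hC n) (hfin n) (hint n) ha₀ ha

lemma tendsto_measure_lt_div_and_lt [IsFiniteMeasure μ] {β : Type*} {l : Filter β}
    {g h : β → α → ℝ} {ε : β → ℝ} {C a : ℝ} (hg₀ : ∀ n x, 0 ≤ g n x)
    (hg : ∀ n, Measurable (g n)) (hh : ∀ n, Measurable (h n))
    (hε₀ : ∀ n, 0 < ε n) (hε : Tendsto ε l (𝓝 0))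
    (hC : ∀ n, ∀ᵐ x ∂μ, h n x ≤ g n x → g n x ≤ C)
    (hfin : ∀ n, ∫⁻ x, ENNReal.ofReal (g n x) ∂μ ≠ ∞)
    (hint : ∀ n, ∫⁻ x, ENNReal.ofReal (h n x) ∂μ ≤
      ENNReal.ofReal (ε n ^ 2) * ∫⁻ x, ENNReal.ofReal (g n x) ∂μ) (ha : 0 < a) :
    Tendsto (fun n ↦ μ {x | ε n < h n x / g n x ∧ a < g n x}) l (𝓝 0) := by
  have hlim := tendsto_measure_mul_lt_and_lt (μ := μ) (C := ENNReal.ofReal C)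
    (a := ENNReal.ofReal a) (fun n ↦ (hg n).ennreal_ofReal) (fun n ↦ (hh n).ennreal_ofReal)
    (fun n ↦ (ENNReal.ofReal_pos.mpr (hε₀ n)).ne')
    (by simpa only [ENNReal.ofReal_zero] using ENNReal.tendsto_ofReal hε)
    ENNReal.ofReal_ne_top
    (fun n ↦ (hC n).mono fun x hx hle ↦
      ENNReal.ofReal_le_ofReal (hx ((ENNReal.ofReal_le_ofReal_iff (hg₀ n x)).mp hle)))
    hfin (fun n ↦ by rw [← ENNReal.ofReal_pow (hε₀ n).le]; exact hint n)
    (ENNReal.ofReal_pos.mpr ha).ne' ENNReal.ofReal_ne_top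
  refine tendsto_of_tendsto_of_tendsto_of_le_of_le tendsto_const_nhds hlim
    (fun _ ↦ zero_le) fun n ↦ measure_mono fun x ⟨hlt, hax⟩ ↦ ?_
  have hgx : 0 < g n x := ha.trans hax
  rw [lt_div_iff₀ hgx] at hlt
  refine ⟨?_, (ENNReal.ofReal_lt_ofReal_iff hgx).mpr hax⟩
  rw [← ENNReal.ofReal_mul (hε₀ n).le]
  exact (ENNReal.ofReal_lt_ofReal_iff ((mul_pos (hε₀ n) hgx).trans hlt)).mpr hlt

end Concentration

theorem measure_vn_gt_eps_inter_gn_gt_a_tendsto_zero_general {α β n : Type*} [MeasurableSpace α]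
    {μ : Measure α} [IsFiniteMeasure μ] [Fintype n] [DecidableEq n] {l : Filter β}
    {K : Set (Matrix n n ℝ)} (hK : IsCompact K) (hminor : ∀ A ∈ K, PrincipalMinorsNeZero A)
    {p M a : ℝ} (hp : 0 ≤ p) {A : β → α → Matrix n n ℝ} {m u f : β → α → n → ℝ}
    (hf : ∀ k x, f k x = m k x - A k x *ᵥ u k x)
    (hf_meas : ∀ k, Measurable (f k)) (hu_meas : ∀ k, Measurable (u k))
    (hAK : ∀ k, ∀ᵐ x ∂μ, A k x ∈ K) (hmM : ∀ k, ∀ᵐ x ∂μ, ‖m k x‖ ≤ M)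
    (hu : ∀ k, ∀ᵐ x ∂μ, 0 ≤ u k x) {ε : β → ℝ} (hε₀ : ∀ k, 0 < ε k) (hε : Tendsto ε l (𝓝 0))
    (hfin : ∀ k, ∫⁻ x, ENNReal.ofReal (absPowSum p (f k x)) ∂μ ≠ ∞)
    (hint : ∀ k, ∫⁻ x, ENNReal.ofReal (weightedAbsPowSum p (u k x) (f k x)) ∂μ ≤
      ENNReal.ofReal (ε k ^ 2) * ∫⁻ x, ENNReal.ofReal (absPowSum p (f k x)) ∂μ) (ha : 0 < a) :
    Tendsto (fun k ↦ μ {x |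
      ε k < weightedAbsPowSum p (u k x) (f k x) / absPowSum p (f k x) ∧
        a < absPowSum p (f k x)}) l (𝓝 0) := by
  obtain ⟨C, hC⟩ := exists_absPowSum_le_of_weightedAbsPowSum_le hK hminor hp M
  refine tendsto_measure_lt_div_and_lt (fun k x ↦ absPowSum_nonneg p (f k x))
    (fun k ↦ (measurable_absPowSum p).comp (hf_meas k))
    (fun k ↦ (measurable_weightedAbsPowSum p).comp ((hu_meas k).prodMk (hf_meas k)))
    hε₀ hε (C := C) (fun k ↦ ?_) hfin hint ha
  filter_upwards [hAK k, hmM k, hu k] with x hAx hmx hux hle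
  rw [hf] at hle ⊢
  exact hC _ hAx _ _ hmx hux hle

section Admissible

variable {d N : ℕ} {κ p : ℝ}

lemma minorM_empty (A : Matrix (Fin N) (Fin N) ℝ) (m : Fin N → ℝ) (j : Fin N) :
    minorM A m ∅ j = m j := by
  rw [minorM, Matrix.det_unique]
  rfl

lemma IsAdmissible.norm_le {A : Matrix (Fin N) (Fin N) ℝ} {m : Fin N → ℝ} (hκ : 0 < κ)
    (h : IsAdmissible κ A m) : ‖m‖ ≤ 1 / κ := by
  obtain ⟨-, hm, -, hbordered⟩ := h
  refine (pi_norm_le_iff_of_nonneg (by positivity)).mpr fun i ↦ ?_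
  have hκm : κ ≤ m i := minorM_empty A m i ▸ hbordered ∅ i (Finset.notMem_empty i)
  rw [Real.norm_of_nonneg (hκ.le.trans hκm)]
  exact hm i

variable {A : (Fin d → ℝ) → Matrix (Fin N) (Fin N) ℝ} {m u : (Fin d → ℝ) → Fin N → ℝ}

lemma measurable_fSeq (hA : ∀ i j, Measurable fun x ↦ A x i j)
    (hm : ∀ i, Measurable fun x ↦ m x i) (hu : ∀ i, Measurable fun x ↦ u x i) :
    Measurable (fSeq A m u) := by
  unfold fSeq
  fun_prop

lemma vSeq_of_gSeq_ne_zero {x : Fin d → ℝ} (hx : gSeq A m u p x ≠ 0) :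
    vSeq A m u p x =
      weightedAbsPowSum p (u x) (fSeq A m u x) / absPowSum p (fSeq A m u x) :=
  if_neg hx

lemma setOf_lt_vSeq_inter_setOf_lt_gSeq {Ω : Set (Fin d → ℝ)} {ε a : ℝ} (ha : 0 ≤ a) :
    {x ∈ Ω | ε < vSeq A m u p x} ∩ {x ∈ Ω | a < gSeq A m u p x} =
      {x | ε < weightedAbsPowSum p (u x) (fSeq A m u x) / absPowSum p (fSeq A m u x) ∧
        a < absPowSum p (fSeq A m u x)} ∩ Ω := by
  ext x
  constructor
  · rintro ⟨⟨hx, hv⟩, -, hg⟩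
    exact ⟨⟨vSeq_of_gSeq_ne_zero (ha.trans_lt hg).ne' ▸ hv, hg⟩, hx⟩
  · rintro ⟨⟨hv, hg⟩, hx⟩
    exact ⟨⟨hx, (vSeq_of_gSeq_ne_zero (ha.trans_lt hg).ne').symm ▸ hv⟩, hx, hg⟩

end Admissible

/-- In the sequence setup, for every `a > 0`,
`|{v_n > ε_n} ∩ {g_n > a}| → 0` as `n → ∞`. -/
theorem measure_vn_gt_eps_inter_gn_gt_a_tendsto_zero {d N : ℕ} (hN : 0 < N)
    (p κ : ℝ) (hp : 1 ≤ p) (hκ : 0 < κ)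
    (Ω : Set (Fin d → ℝ)) (hΩo : IsOpen Ω) (hΩb : Bornology.IsBounded Ω)
    (A : ℕ → (Fin d → ℝ) → Matrix (Fin N) (Fin N) ℝ)
    (m : ℕ → (Fin d → ℝ) → Fin N → ℝ)
    (u : ℕ → (Fin d → ℝ) → Fin N → ℝ)
    (hAmeas : ∀ n i j, Measurable fun x => A n x i j)
    (hmmeas : ∀ n i, Measurable fun x => m n x i)
    (humeas : ∀ n i, Measurable fun x => u n x i)
    (hadm : ∀ n, ∀ x ∈ Ω, IsAdmissible κ (A n x) (m n x))
    (hu0 : ∀ n, ∀ x ∈ Ω, ∀ i, 0 ≤ u n x i)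
    (eps : ℕ → ℝ) (heps : ∀ n, eps n ∈ Set.Ioo (0 : ℝ) 1)
    (hepslim : Tendsto eps atTop (nhds 0))
    (hgint : ∀ n, ∫⁻ x in Ω, ENNReal.ofReal (gSeq (A n) (m n) (u n) p x) < ⊤)
    (hmain : ∀ n,
      ∫⁻ x in Ω, ENNReal.ofReal (∑ i, u n x i * |fSeq (A n) (m n) (u n) x i| ^ p) ≤
        ENNReal.ofReal (eps n ^ 2) *
          ∫⁻ x in Ω, ENNReal.ofReal (gSeq (A n) (m n) (u n) p x)) :
    ∀ a : ℝ, 0 < a →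
      Tendsto (fun n => volume ({x ∈ Ω | eps n < vSeq (A n) (m n) (u n) p x} ∩
          {x ∈ Ω | a < gSeq (A n) (m n) (u n) p x})) atTop (nhds 0) := by
  intro a ha
  have : IsFiniteMeasure (volume.restrict Ω) := ⟨by simpa using hΩb.measure_lt_top⟩
  have on_Ω {P : (Fin d → ℝ) → Prop} (h : ∀ x ∈ Ω, P x) : ∀ᵐ x ∂volume.restrict Ω, P x :=
    ae_restrict_of_forall_mem hΩo.measurableSet h
  simp_rw [setOf_lt_vSeq_inter_setOf_lt_gSeq ha.le, ← Measure.restrict_apply' hΩo.measurableSet]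
  exact measure_vn_gt_eps_inter_gn_gt_a_tendsto_zero_general
    (isCompact_setOf_abs_le_and_le_det_submatrix (1 / κ) κ)
    (fun _ hA s ↦ (hκ.trans_le (hA.2 s)).ne') (zero_le_one.trans hp) (fun _ _ ↦ rfl)
    (fun n ↦ measurable_fSeq (hAmeas n) (hmmeas n) (humeas n))
    (fun n ↦ measurable_pi_iff.mpr (humeas n))
    (fun n ↦ on_Ω fun x hx ↦ ⟨(hadm n x hx).1, (hadm n x hx).2.2.1⟩)
    (fun n ↦ on_Ω fun x hx ↦ (hadm n x hx).norm_le hκ)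
    (fun n ↦ on_Ω (hu0 n)) (fun n ↦ (heps n).1) hepslim (fun n ↦ (hgint n).ne) hmain ha
end

section
/- In the sequence setup described in the context, for every a > 0 there exists a constant C_a > 0 such that for all sufficiently large n, |{x ∈ Ω : g_n(x) > a}| ≤ C_a |{x ∈ Ω : v_n(x) ≤ ε_n}|. -/
/-!
Set `f = m - A u`, `g = Σ |fᵢ|^p` and `w = Σ uᵢ |fᵢ|^p`, so that `v = w / g` where `g ≠ 0`, and the
hypothesis reads `∫ w ≤ ε² ∫ g`. Let `S = {g > 0, w ≤ ε g}`. Off `S` one has `ε g ≤ w`, so the part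
of `∫ g` off `S` is at most `ε ∫ g` and is absorbed. If `g ≤ C` on `S`, this leaves
`(1 - ε) ∫ g ≤ C |S|`, and Markov's inequality bounds `|{g > a}|`.

The bound on `S` is pointwise and comes from coercivity. A matrix with positive principal minors
reverses the sign of no nonzero vector, and by compactness this becomes `uᵢ (A u)ᵢ ≥ c ‖u‖²` for
some `i`, uniformly in `A`. For large `‖u‖`, both `uᵢ` and `|fᵢ|` are then of order `‖u‖`, so `w` is
at least of order `‖u‖^(p+1)` while `g` is at most of order `‖u‖^p`, contradicting `w ≤ g`.
-/

open MeasureTheory Filter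

open Matrix ENNReal

section PMatrix

variable {ι R : Type*} [DecidableEq ι] [CommRing R]

/-- The principal minor of `A` on the rows and columns in `I`; this is `minorP` over any index type
and any commutative ring. -/
def principalMinor (A : Matrix ι ι R) (I : Finset ι) : R :=
  (A.submatrix ((↑) : I → ι) (↑)).det

/-- A P-matrix: all principal minors are positive. -/
def IsPMatrix [PartialOrder R] (A : Matrix ι ι R) : Prop :=
  ∀ I, 0 < principalMinor A I

theorem det_diagonal_mul_add_diagonal [Fintype ι] (A : Matrix ι ι R) (s t : ι → R) :
    (diagonal s * A + diagonal t).det =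
      ∑ I : Finset ι, (∏ i, I.piecewise s t i) * principalMinor A I := by
  let D : (ι → R) [⋀^ι]→ₗ[R] R := detRowAlternating
  have rows_piecewise (I : Finset ι) :
      I.piecewise (fun i => s i • A.row i) (fun i => t i • (1 : Matrix ι ι R).row i) =
        fun i => I.piecewise s t i • I.piecewise A.row (1 : Matrix ι ι R).row i := by
    funext i
    by_cases hi : i ∈ I <;> simp [hi]
  calc (diagonal s * A + diagonal t).det
      = D ((fun i => s i • A.row i) + fun i => t i • (1 : Matrix ι ι R).row i) := by
        refine congrArg D (funext₂ fun i j => ?_)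
        simp [Matrix.row, diagonal_apply, one_apply]
    _ = ∑ I : Finset ι,
          (∏ i, I.piecewise s t i) • D (I.piecewise A.row (1 : Matrix ι ι R).row) := by
        simp_rw [D.map_add_univ, rows_piecewise, D.map_smul_univ]
    _ = ∑ I : Finset ι, (∏ i, I.piecewise s t i) * principalMinor A I :=
        Finset.sum_congr rfl fun I _ =>
          congrArg ((∏ i, I.piecewise s t i) * ·) (det_piecewise_one_eq_submatrix_det A I)

namespace IsPMatrix

variable [Fintype ι] [LinearOrder R] [IsStrictOrderedRing R] {A : Matrix ι ι R}

theorem det_diagonal_mul_add_diagonal_pos (hA : IsPMatrix A) {s t : ι → R}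
    (hs : ∀ i, 0 ≤ s i) (ht : ∀ i, 0 ≤ t i) (hst : ∀ i, s i = 0 → 0 < t i) :
    0 < (diagonal s * A + diagonal t).det := by
  rw [det_diagonal_mul_add_diagonal]
  refine Finset.sum_pos' (fun I _ => mul_nonneg (Finset.prod_nonneg fun i _ => ?_) (hA I).le)
    ⟨Finset.univ.filter (s · ≠ 0), Finset.mem_univ _,
      mul_pos (Finset.prod_pos fun i _ => ?_) (hA _)⟩
  · by_cases hi : i ∈ I <;> simp [hi, hs, ht]
  · by_cases hi : s i = 0
    · simpa [Finset.piecewise, hi] using hst i hi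
    · simpa [Finset.piecewise, hi] using (hs i).lt_of_ne' hi

theorem exists_pos_mul_mulVec (hA : IsPMatrix A) {u : ι → R} (hu : u ≠ 0) :
    ∃ i, 0 < u i * (A *ᵥ u) i := by
  by_contra! hneg
  -- Nonnegative weights for which `diagonal s * A + diagonal t` annihilates `u`.
  let s : ι → R := fun i => u i ^ 2
  let t : ι → R := fun i => if u i = 0 then 1 else -(u i * (A *ᵥ u) i)
  have hdet : 0 < (diagonal s * A + diagonal t).det := by
    refine hA.det_diagonal_mul_add_diagonal_pos (fun i => sq_nonneg _) (fun i => ?_) fun i hi => ?_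
    · by_cases h : u i = 0 <;> simp [t, h, hneg i]
    · simp [t, pow_eq_zero_iff two_ne_zero |>.1 hi]
  have hker : (diagonal s * A + diagonal t) *ᵥ u = 0 := by
    funext i
    rw [add_mulVec, ← mulVec_mulVec, Pi.add_apply, mulVec_diagonal, mulVec_diagonal]
    by_cases h : u i = 0
    · simp [s, h]
    · simp only [s, t, h, if_false, Pi.zero_apply]
      ring
  exact hu (eq_zero_of_mulVec_eq_zero hdet.ne' hker)

end IsPMatrix

end PMatrix

section MulVec

variable {ι : Type*} [Fintype ι] {K M : ℝ}

theorem abs_mulVec_le_of_abs_le {A : Matrix ι ι ℝ} (hA : ∀ i j, |A i j| ≤ K) (u : ι → ℝ) (i : ι) :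
    |(A *ᵥ u) i| ≤ Fintype.card ι * K * ‖u‖ :=
  calc |(A *ᵥ u) i| ≤ ∑ j, |A i j * u j| := Finset.abs_sum_le_sum_abs _ _
    _ ≤ ∑ _j : ι, K * ‖u‖ := Finset.sum_le_sum fun j _ => by
        rw [abs_mul]
        exact mul_le_mul (hA i j) (norm_le_pi_norm u j) (abs_nonneg _)
          ((abs_nonneg _).trans (hA i j))
    _ = Fintype.card ι * K * ‖u‖ := by simp [mul_assoc]

theorem abs_sub_mulVec_le {A : Matrix ι ι ℝ} {m : ι → ℝ} (hA : ∀ i j, |A i j| ≤ K)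
    (hm : ∀ i, |m i| ≤ M) (u : ι → ℝ) (i : ι) :
    |(m - A *ᵥ u) i| ≤ (M + Fintype.card ι * K) * max 1 ‖u‖ := by
  have hM : 0 ≤ M := (abs_nonneg _).trans (hm i)
  have hK : 0 ≤ K := (abs_nonneg _).trans (hA i i)
  calc |(m - A *ᵥ u) i| ≤ |m i| + |(A *ᵥ u) i| := abs_sub _ _
    _ ≤ M * 1 + Fintype.card ι * K * ‖u‖ := by
        rw [mul_one]
        exact add_le_add (hm i) (abs_mulVec_le_of_abs_le hA u i)
    _ ≤ M * max 1 ‖u‖ + Fintype.card ι * K * max 1 ‖u‖ := by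
        gcongr
        exacts [le_max_left _ _, le_max_right _ _]
    _ = (M + Fintype.card ι * K) * max 1 ‖u‖ := by ring

theorem half_mul_sq_norm_le_mul_abs_sub_mulVec {A : Matrix ι ι ℝ} {m u : ι → ℝ} {c : ℝ} {i : ι}
    (hu : 0 ≤ u i) (hcoercive : c * ‖u‖ ^ 2 ≤ u i * (A *ᵥ u) i) (hm : |m i| ≤ c / 2 * ‖u‖) :
    c / 2 * ‖u‖ * ‖u‖ ≤ u i * |(m - A *ᵥ u) i| := by
  have hu_le : u i ≤ ‖u‖ := (le_abs_self _).trans (norm_le_pi_norm u i)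
  calc c / 2 * ‖u‖ * ‖u‖ = c * ‖u‖ ^ 2 - ‖u‖ * (c / 2 * ‖u‖) := by ring
    _ ≤ u i * (A *ᵥ u) i - u i * m i :=
        sub_le_sub hcoercive ((mul_le_mul_of_nonneg_left ((le_abs_self _).trans hm) hu).trans
          (mul_le_mul_of_nonneg_right hu_le ((abs_nonneg _).trans hm)))
    _ = u i * -(m - A *ᵥ u) i := by rw [Pi.sub_apply]; ring
    _ ≤ u i * |(m - A *ᵥ u) i| := mul_le_mul_of_nonneg_left (neg_le_abs _) hu

end MulVec

section Coercivity

variable {ι : Type*} [DecidableEq ι] {K κ : ℝ}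

variable (ι) in
/-- The matrices with entries bounded by `K` and principal minors at least `κ`. For `κ > 0` these
are P-matrices, with quantitative bounds that make the set compact. -/
def uniformPMatrices (K κ : ℝ) : Set (Matrix ι ι ℝ) :=
  {A | (∀ i j, |A i j| ≤ K) ∧ ∀ I, κ ≤ principalMinor A I}

theorem isPMatrix_of_mem_uniformPMatrices (hκ : 0 < κ) {A : Matrix ι ι ℝ}
    (hA : A ∈ uniformPMatrices ι K κ) : IsPMatrix A :=
  fun I => hκ.trans_le (hA.2 I)

theorem isCompact_uniformPMatrices [Finite ι] : IsCompact (uniformPMatrices ι K κ) := by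
  have hentries : IsCompact {A : Matrix ι ι ℝ | ∀ i j, |A i j| ≤ K} := by
    have heq : {A : Matrix ι ι ℝ | ∀ i j, |A i j| ≤ K} =
        Set.univ.pi fun _ => Set.univ.pi fun _ => Set.Icc (-K) K := by
      ext A
      exact ⟨fun h i _ j _ => abs_le.1 (h i j), fun h i j => abs_le.2 (h i trivial j trivial)⟩
    rw [heq]
    exact isCompact_univ_pi fun _ => isCompact_univ_pi fun _ => isCompact_Icc
  have hminors : IsClosed {A : Matrix ι ι ℝ | ∀ I, κ ≤ principalMinor A I} := by
    rw [Set.ofPred_forall]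
    exact isClosed_iInter fun I => isClosed_le continuous_const
      (continuous_id.matrix_submatrix _ _).matrix_det
  exact hentries.inter_right hminors

variable [Fintype ι]

theorem exists_forall_mul_sq_norm_le_mul_mulVec (K : ℝ) (hκ : 0 < κ) :
    ∃ c > 0, ∀ A ∈ uniformPMatrices ι K κ, ∀ u ≠ 0, ∃ i, c * ‖u‖ ^ 2 ≤ u i * (A *ᵥ u) i := by
  cases isEmpty_or_nonempty ι
  · exact ⟨1, one_pos, fun A _ u hu => absurd (Subsingleton.elim u 0) hu⟩
  let F : Matrix ι ι ℝ × (ι → ℝ) → ℝ := fun q =>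
    Finset.univ.sup' Finset.univ_nonempty fun i => q.2 i * (q.1 *ᵥ q.2) i
  have hF : Continuous F := Continuous.finset_sup'_apply _ fun i _ =>
    ((continuous_apply i).comp continuous_snd).mul
      ((continuous_apply i).comp (continuous_fst.matrix_mulVec continuous_snd))
  have hFpos : ∀ q ∈ uniformPMatrices ι K κ ×ˢ Metric.sphere 0 1, 0 < F q := by
    rintro ⟨A, u⟩ ⟨hA, hu⟩
    have hu0 : u ≠ 0 := ne_zero_of_mem_unit_sphere ⟨u, hu⟩
    obtain ⟨i, hi⟩ := (isPMatrix_of_mem_uniformPMatrices hκ hA).exists_pos_mul_mulVec hu0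
    exact (Finset.lt_sup'_iff _).2 ⟨i, Finset.mem_univ i, hi⟩
  obtain ⟨c, hc, hcF⟩ := (isCompact_uniformPMatrices.prod
    (isCompact_sphere (0 : ι → ℝ) 1)).exists_forall_le' hF.continuousOn hFpos
  refine ⟨c, hc, fun A hA u hu => ?_⟩
  have hnorm : 0 < ‖u‖ := norm_pos_iff.2 hu
  have hunit : ‖u‖⁻¹ • u ∈ Metric.sphere (0 : ι → ℝ) 1 := by simp [norm_smul, hnorm.ne']
  obtain ⟨i, -, hi⟩ := (Finset.le_sup'_iff _).1 (hcF (A, ‖u‖⁻¹ • u) ⟨hA, hunit⟩)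
  refine ⟨i, ?_⟩
  simp only [mulVec_smul, Pi.smul_apply, smul_eq_mul] at hi
  calc c * ‖u‖ ^ 2 ≤ ‖u‖⁻¹ * u i * (‖u‖⁻¹ * (A *ᵥ u) i) * ‖u‖ ^ 2 := by gcongr
    _ = u i * (A *ᵥ u) i := by field_simp

theorem exists_forall_mul_norm_le_and_le_abs_sub_mulVec (K M : ℝ) (hκ : 0 < κ) :
    ∃ b > 0, ∃ r ≥ 1, ∀ A ∈ uniformPMatrices ι K κ, ∀ m u : ι → ℝ, (∀ i, |m i| ≤ M) → 0 ≤ u →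
      r ≤ ‖u‖ → ∃ i, b * ‖u‖ ≤ u i ∧ b * ‖u‖ ≤ |(m - A *ᵥ u) i| := by
  obtain ⟨c, hc, hcoercive⟩ := exists_forall_mul_sq_norm_le_mul_mulVec (ι := ι) K hκ
  set L : ℝ := max 1 (M + Fintype.card ι * K)
  have hL : 0 < L := one_pos.trans_le (le_max_left _ _)
  refine ⟨min (c / 2 / L) (c / 2), by positivity, max 1 (2 * M / c), le_max_left _ _,
    fun A hA m u hm hu hr => ?_⟩
  have hone : 1 ≤ ‖u‖ := (le_max_left _ _).trans hr
  have hpos : 0 < ‖u‖ := one_pos.trans_le hone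
  obtain ⟨i, hi⟩ := hcoercive A hA u (norm_pos_iff.1 hpos)
  have hu_le : u i ≤ ‖u‖ := (le_abs_self _).trans (norm_le_pi_norm u i)
  have hf_le : |(m - A *ᵥ u) i| ≤ L * ‖u‖ := by
    refine (abs_sub_mulVec_le hA.1 hm u i).trans ?_
    rw [max_eq_right hone]
    gcongr
    exact le_max_right _ _
  have hM : M ≤ c / 2 * ‖u‖ := by
    have := (div_le_iff₀ hc).1 ((le_max_right _ _).trans hr)
    linarith
  have hprod : c / 2 * ‖u‖ * ‖u‖ ≤ u i * |(m - A *ᵥ u) i| :=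
    half_mul_sq_norm_le_mul_abs_sub_mulVec (hu i) hi ((hm i).trans hM)
  refine ⟨i, (mul_le_mul_of_nonneg_right (min_le_left _ _) hpos.le).trans ?_,
    (mul_le_mul_of_nonneg_right (min_le_right _ _) hpos.le).trans ?_⟩
  · have := hprod.trans (mul_le_mul_of_nonneg_left hf_le (hu i))
    rw [div_mul_eq_mul_div, div_le_iff₀ hL]
    exact le_of_mul_le_mul_right (this.trans_eq (mul_assoc _ _ _).symm) hpos
  · have := hprod.trans (mul_le_mul_of_nonneg_right hu_le (abs_nonneg _))
    exact le_of_mul_le_mul_left ((mul_comm _ _).trans_le this) hpos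

end Coercivity

section PowerSum

variable {ι : Type*} [Fintype ι] {p : ℝ}

/-- The sum `Σ |fᵢ|^p`, which is `g` when `f = m - A u`. -/
noncomputable def powSum (p : ℝ) (f : ι → ℝ) : ℝ :=
  ∑ i, |f i| ^ p

/-- The weighted sum `Σ uᵢ |fᵢ|^p`, which is `v g` when `f = m - A u` and `g ≠ 0`. -/
noncomputable def weightedPowSum (p : ℝ) (u f : ι → ℝ) : ℝ :=
  ∑ i, u i * |f i| ^ p

theorem powSum_nonneg (p : ℝ) (f : ι → ℝ) : 0 ≤ powSum p f :=
  Finset.sum_nonneg fun _ _ => by positivity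

theorem weightedPowSum_nonneg (p : ℝ) {u : ι → ℝ} (hu : 0 ≤ u) (f : ι → ℝ) :
    0 ≤ weightedPowSum p u f :=
  Finset.sum_nonneg fun i _ => mul_nonneg (hu i) (by positivity)

theorem aemeasurable_powSum {X : Type*} [MeasurableSpace X] {μ : Measure X} (p : ℝ)
    {f : X → ι → ℝ} (hf : ∀ i, AEMeasurable (fun x => f x i) μ) :
    AEMeasurable (fun x => powSum p (f x)) μ :=
  Finset.aemeasurable_fun_sum _ fun i _ => (hf i).abs.pow_const p

theorem aemeasurable_weightedPowSum {X : Type*} [MeasurableSpace X] {μ : Measure X} (p : ℝ)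
    {u f : X → ι → ℝ} (hu : ∀ i, AEMeasurable (fun x => u x i) μ)
    (hf : ∀ i, AEMeasurable (fun x => f x i) μ) :
    AEMeasurable (fun x => weightedPowSum p (u x) (f x)) μ :=
  Finset.aemeasurable_fun_sum _ fun i _ => (hu i).mul ((hf i).abs.pow_const p)

theorem powSum_le_card_mul_rpow (hp : 0 ≤ p) {f : ι → ℝ} {B : ℝ} (hf : ∀ i, |f i| ≤ B) :
    powSum p f ≤ Fintype.card ι * B ^ p :=
  calc powSum p f ≤ ∑ _i : ι, B ^ p :=
        Finset.sum_le_sum fun i _ => Real.rpow_le_rpow (abs_nonneg _) (hf i) hp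
    _ = Fintype.card ι * B ^ p := by simp

theorem mul_rpow_le_weightedPowSum (hp : 0 ≤ p) {u f : ι → ℝ} (hu : 0 ≤ u) {b : ℝ} (hb : 0 ≤ b)
    {i : ι} (hui : b ≤ u i) (hfi : b ≤ |f i|) : b * b ^ p ≤ weightedPowSum p u f :=
  calc b * b ^ p ≤ u i * |f i| ^ p :=
        mul_le_mul hui (Real.rpow_le_rpow hb hfi hp) (by positivity) (hu i)
    _ ≤ weightedPowSum p u f :=
        Finset.single_le_sum (f := fun i => u i * |f i| ^ p)
          (fun j _ => mul_nonneg (hu j) (by positivity)) (Finset.mem_univ i)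

variable [DecidableEq ι] {κ : ℝ}

theorem exists_forall_norm_le_of_weightedPowSum_le (hp : 0 ≤ p) (K M : ℝ) (hκ : 0 < κ) :
    ∃ r, ∀ A ∈ uniformPMatrices ι K κ, ∀ m u : ι → ℝ, (∀ i, |m i| ≤ M) → 0 ≤ u →
      weightedPowSum p u (m - A *ᵥ u) ≤ powSum p (m - A *ᵥ u) → ‖u‖ ≤ r := by
  obtain ⟨b, hb, r, hr, hindex⟩ :=
    exists_forall_mul_norm_le_and_le_abs_sub_mulVec (ι := ι) K M hκ
  set L : ℝ := M + Fintype.card ι * K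
  refine ⟨max r (Fintype.card ι * (L / b) ^ p / b), fun A hA m u hm hu hle => ?_⟩
  rw [le_max_iff, or_iff_not_imp_left, not_le]
  intro hlarge
  have hone : 1 ≤ ‖u‖ := hr.trans hlarge.le
  have hbu : 0 < b * ‖u‖ := by positivity
  obtain ⟨i, hui, hfi⟩ := hindex A hA m u hm hu hlarge.le
  have hf (j : ι) : |(m - A *ᵥ u) j| ≤ L * ‖u‖ := by
    simpa only [max_eq_right hone] using abs_sub_mulVec_le hA.1 hm u j
  have hL : 0 ≤ L := nonneg_of_mul_nonneg_left ((abs_nonneg _).trans (hf i)) (one_pos.trans_le hone)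
  have hkey : b * ‖u‖ * (b * ‖u‖) ^ p ≤ Fintype.card ι * (L / b) ^ p * (b * ‖u‖) ^ p :=
    calc b * ‖u‖ * (b * ‖u‖) ^ p ≤ weightedPowSum p u (m - A *ᵥ u) :=
          mul_rpow_le_weightedPowSum hp hu hbu.le hui hfi
      _ ≤ Fintype.card ι * (L * ‖u‖) ^ p := hle.trans (powSum_le_card_mul_rpow hp hf)
      _ = Fintype.card ι * (L / b) ^ p * (b * ‖u‖) ^ p := by
          rw [mul_assoc, ← Real.mul_rpow (by positivity) hbu.le, ← mul_assoc,
            div_mul_cancel₀ _ hb.ne']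
  rw [le_div_iff₀ hb, mul_comm]
  exact le_of_mul_le_mul_right hkey (by positivity)

theorem exists_forall_powSum_le_of_weightedPowSum_le (hp : 0 ≤ p) (K M : ℝ) (hκ : 0 < κ) :
    ∃ C > 0, ∀ A ∈ uniformPMatrices ι K κ, ∀ m u : ι → ℝ, (∀ i, |m i| ≤ M) → 0 ≤ u →
      weightedPowSum p u (m - A *ᵥ u) ≤ powSum p (m - A *ᵥ u) → powSum p (m - A *ᵥ u) ≤ C := by
  obtain ⟨r, hr⟩ := exists_forall_norm_le_of_weightedPowSum_le (ι := ι) hp K M hκ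
  set L : ℝ := max 1 (M + Fintype.card ι * K)
  refine ⟨max 1 (Fintype.card ι * (L * max 1 r) ^ p), by positivity,
    fun A hA m u hm hu hle => le_max_of_le_right (powSum_le_card_mul_rpow hp fun i => ?_)⟩
  calc |(m - A *ᵥ u) i| ≤ (M + Fintype.card ι * K) * max 1 ‖u‖ := abs_sub_mulVec_le hA.1 hm u i
    _ ≤ L * max 1 r := by
        gcongr
        exacts [le_max_right _ _, hr A hA m u hm hu hle]

end PowerSum

section Absorption

variable {X : Type*} [MeasurableSpace X] {μ : Measure X}

theorem one_sub_mul_lintegral_le_mul_measure {g w : X → ℝ≥0∞} {S : Set X} {C ε : ℝ≥0∞}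
    (hw : AEMeasurable w μ) (hε0 : ε ≠ 0) (hε : ε ≠ ∞) (hgC : ∀ᵐ x ∂μ, x ∈ S → g x ≤ C)
    (hgw : ∀ᵐ x ∂μ, x ∉ S → ε * g x ≤ w x)
    (hg : ∫⁻ x, g x ∂μ ≠ ∞) (hwg : ∫⁻ x, w x ∂μ ≤ ε ^ 2 * ∫⁻ x, g x ∂μ) :
    (1 - ε) * ∫⁻ x, g x ∂μ ≤ C * μ S := by
  have hpt : ∀ᵐ x ∂μ, g x ≤ S.indicator (fun _ => C) x + ε⁻¹ * w x := by
    filter_upwards [hgC, hgw] with x hgC hgw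
    by_cases hx : x ∈ S
    · exact le_add_right (by simpa only [Set.indicator_of_mem hx] using hgC hx)
    · exact le_add_left ((ENNReal.mul_le_iff_le_inv hε0 hε).1 (hgw hx))
  have hsplit : ∫⁻ x, g x ∂μ ≤ C * μ S + ε * ∫⁻ x, g x ∂μ :=
    calc ∫⁻ x, g x ∂μ ≤ ∫⁻ x, S.indicator (fun _ => C) x + ε⁻¹ * w x ∂μ := lintegral_mono_ae hpt
      _ = ∫⁻ x, S.indicator (fun _ => C) x ∂μ + ε⁻¹ * ∫⁻ x, w x ∂μ := by
          rw [lintegral_add_right' _ (hw.const_mul _), lintegral_const_mul'' _ hw]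
      _ ≤ C * μ S + ε⁻¹ * (ε ^ 2 * ∫⁻ x, g x ∂μ) := by
          gcongr
          exact lintegral_indicator_const_le S C
      _ = C * μ S + ε * ∫⁻ x, g x ∂μ := by
          rw [← mul_assoc, sq, ← mul_assoc, ENNReal.inv_mul_cancel hε0 hε, one_mul]
  rw [ENNReal.sub_mul fun _ _ => hg, one_mul]
  exact tsub_le_iff_right.2 hsplit

theorem ofReal_mul_measure_lt_le_mul_measure {g w : X → ℝ} {a C ε : ℝ} (hg : AEMeasurable g μ)
    (hw : AEMeasurable w μ) (hg0 : 0 ≤ᵐ[μ] g) (hw0 : 0 ≤ᵐ[μ] w) (hε0 : 0 < ε) (hε : ε ≤ 1)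
    (hgC : ∀ᵐ x ∂μ, w x ≤ ε * g x → g x ≤ C)
    (hgfin : ∫⁻ x, .ofReal (g x) ∂μ ≠ ∞)
    (hwg : ∫⁻ x, .ofReal (w x) ∂μ ≤ .ofReal (ε ^ 2) * ∫⁻ x, .ofReal (g x) ∂μ) :
    .ofReal ((1 - ε) * a) * μ {x | a < g x} ≤ .ofReal C * μ {x | 0 < g x ∧ w x ≤ ε * g x} := by
  have hmarkov : .ofReal a * μ {x | a < g x} ≤ ∫⁻ x, .ofReal (g x) ∂μ :=
    le_trans (by gcongr; exact fun hx => ENNReal.ofReal_le_ofReal (le_of_lt hx))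
      (mul_meas_ge_le_lintegral₀ hg.ennreal_ofReal (.ofReal a))
  calc .ofReal ((1 - ε) * a) * μ {x | a < g x}
      = (1 - .ofReal ε) * (.ofReal a * μ {x | a < g x}) := by
        rw [ENNReal.ofReal_mul (sub_nonneg.2 hε), ENNReal.ofReal_sub _ hε0.le, ENNReal.ofReal_one,
          mul_assoc]
    _ ≤ (1 - .ofReal ε) * ∫⁻ x, .ofReal (g x) ∂μ := by gcongr
    _ ≤ .ofReal C * μ {x | 0 < g x ∧ w x ≤ ε * g x} := by
        refine one_sub_mul_lintegral_le_mul_measure hw.ennreal_ofReal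
          (ENNReal.ofReal_pos.2 hε0).ne' ENNReal.ofReal_ne_top ?_ ?_ hgfin
          (by rwa [← ENNReal.ofReal_pow hε0.le])
        · filter_upwards [hgC] with x hgC hx using ENNReal.ofReal_le_ofReal (hgC hx.2)
        · filter_upwards [hg0, hw0] with x hg0 hw0 hx
          rw [← ENNReal.ofReal_mul hε0.le]
          refine ENNReal.ofReal_le_ofReal ?_
          rcases hg0.eq_or_lt with hzero | hpos
          · simpa [← hzero] using hw0
          · exact le_of_not_ge fun hle => hx ⟨hpos, hle⟩

end Absorption

theorem measure_gn_gt_a_le_const_mul_measure_vn_le_eps_general {ι X : Type*} [Fintype ι]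
    [DecidableEq ι] [MeasurableSpace X] {p κ a θ : ℝ} (hp : 0 ≤ p) (hκ : 0 < κ) (K M : ℝ)
    (ha : 0 < a) (hθ : θ < 1) :
    ∃ C > 0, ∀ {μ : Measure X} {Ω : Set X} {A : X → Matrix ι ι ℝ} {m u : X → ι → ℝ} {ε : ℝ},
      MeasurableSet Ω →
      (∀ i j, AEMeasurable (fun x => A x i j) (μ.restrict Ω)) →
      (∀ i, AEMeasurable (fun x => m x i) (μ.restrict Ω)) →
      (∀ i, AEMeasurable (fun x => u x i) (μ.restrict Ω)) →
      (∀ x ∈ Ω, A x ∈ uniformPMatrices ι K κ) → (∀ x ∈ Ω, ∀ i, |m x i| ≤ M) →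
      (∀ x ∈ Ω, 0 ≤ u x) → 0 < ε → ε ≤ θ →
      ∫⁻ x in Ω, .ofReal (powSum p (m x - A x *ᵥ u x)) ∂μ ≠ ∞ →
      ∫⁻ x in Ω, .ofReal (weightedPowSum p (u x) (m x - A x *ᵥ u x)) ∂μ ≤
        .ofReal (ε ^ 2) * ∫⁻ x in Ω, .ofReal (powSum p (m x - A x *ᵥ u x)) ∂μ →
      μ {x ∈ Ω | a < powSum p (m x - A x *ᵥ u x)} ≤
        .ofReal C * μ {x ∈ Ω | 0 < powSum p (m x - A x *ᵥ u x) ∧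
          weightedPowSum p (u x) (m x - A x *ᵥ u x) ≤ ε * powSum p (m x - A x *ᵥ u x)} := by
  obtain ⟨C, hC, hbound⟩ := exists_forall_powSum_le_of_weightedPowSum_le (ι := ι) hp K M hκ
  have hθa : 0 < (1 - θ) * a := mul_pos (sub_pos.2 hθ) ha
  refine ⟨C / ((1 - θ) * a), by positivity,
    fun {μ Ω A m u ε} hΩ hA hm hu hAU hmM hu0 hε hεθ hfin hmain => ?_⟩
  have hf (i : ι) : AEMeasurable (fun x => (m x - A x *ᵥ u x) i) (μ.restrict Ω) :=
    (hm i).sub (Finset.aemeasurable_fun_sum _ fun j _ => (hA i j).mul (hu j))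
  have hle : .ofReal ((1 - θ) * a) * μ.restrict Ω {x | a < powSum p (m x - A x *ᵥ u x)} ≤
      .ofReal C * μ.restrict Ω {x | 0 < powSum p (m x - A x *ᵥ u x) ∧
        weightedPowSum p (u x) (m x - A x *ᵥ u x) ≤ ε * powSum p (m x - A x *ᵥ u x)} := by
    refine le_trans (by gcongr) (ofReal_mul_measure_lt_le_mul_measure
      (aemeasurable_powSum p hf) (aemeasurable_weightedPowSum p hu hf)
      (ae_of_all _ fun x => powSum_nonneg _ _)
      (ae_restrict_of_forall_mem hΩ fun x hx => weightedPowSum_nonneg _ (hu0 x hx) _)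
      hε (hεθ.trans hθ.le) (ae_restrict_of_forall_mem hΩ fun x hx hle => ?_) hfin hmain)
    exact hbound (A x) (hAU x hx) (m x) (u x) (hmM x hx) (hu0 x hx) <|
      hle.trans (mul_le_of_le_one_left (powSum_nonneg _ _) (hεθ.trans hθ.le))
  simp only [Measure.restrict_apply' hΩ, Set.ofPred_inter_eq_sep] at hle
  rwa [ENNReal.ofReal_div_of_pos hθa, ← ENNReal.mul_div_right_comm, ENNReal.le_div_iff_mul_le
    (.inl (ENNReal.ofReal_pos.2 hθa).ne') (.inl ENNReal.ofReal_ne_top), mul_comm (μ _)]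

theorem minorP_eq_principalMinor {N : ℕ} (A : Matrix (Fin N) (Fin N) ℝ) (I : Finset (Fin N)) :
    minorP A I = principalMinor A I := by
  unfold minorP principalMinor
  congr!

namespace IsAdmissible

variable {N : ℕ} {κ : ℝ} {A : Matrix (Fin N) (Fin N) ℝ} {m : Fin N → ℝ}

theorem mem_uniformPMatrices (h : IsAdmissible κ A m) :
    A ∈ uniformPMatrices (Fin N) (1 / κ) κ :=
  ⟨h.1, fun I => (h.2.2.1 I).trans_eq (minorP_eq_principalMinor A I)⟩

theorem abs_le (h : IsAdmissible κ A m) (hκ : 0 ≤ κ) (i : Fin N) : |m i| ≤ 1 / κ := by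
  have hm : κ ≤ m i := by
    -- `Δ_{∅,i}` is the `1 × 1` determinant `m i`.
    have := h.2.2.2 ∅ i (Finset.notMem_empty i)
    rwa [minorM, det_unique] at this
  rw [abs_of_nonneg (hκ.trans hm)]
  exact h.2.1 i

end IsAdmissible

theorem vSeq_le_of_weightedPowSum_le {d N : ℕ} {A : (Fin d → ℝ) → Matrix (Fin N) (Fin N) ℝ}
    {m u : (Fin d → ℝ) → Fin N → ℝ} {p ε : ℝ} {x : Fin d → ℝ}
    (hpos : 0 < powSum p (m x - A x *ᵥ u x))
    (hle : weightedPowSum p (u x) (m x - A x *ᵥ u x) ≤ ε * powSum p (m x - A x *ᵥ u x)) :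
    vSeq A m u p x ≤ ε :=
  (if_neg hpos.ne').trans_le ((div_le_iff₀ hpos).2 hle)

/-- In the sequence setup, for every `a > 0` there is `C_a > 0` such that for all
sufficiently large `n`, `|{g_n > a}| ≤ C_a |{v_n ≤ ε_n}|`. -/
theorem measure_gn_gt_a_le_const_mul_measure_vn_le_eps {d N : ℕ} (hN : 0 < N)
    (p κ : ℝ) (hp : 1 ≤ p) (hκ : 0 < κ)
    (Ω : Set (Fin d → ℝ)) (hΩo : IsOpen Ω) (hΩb : Bornology.IsBounded Ω)
    (A : ℕ → (Fin d → ℝ) → Matrix (Fin N) (Fin N) ℝ)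
    (m : ℕ → (Fin d → ℝ) → Fin N → ℝ)
    (u : ℕ → (Fin d → ℝ) → Fin N → ℝ)
    (hAmeas : ∀ n i j, Measurable fun x => A n x i j)
    (hmmeas : ∀ n i, Measurable fun x => m n x i)
    (humeas : ∀ n i, Measurable fun x => u n x i)
    (hadm : ∀ n, ∀ x ∈ Ω, IsAdmissible κ (A n x) (m n x))
    (hu0 : ∀ n, ∀ x ∈ Ω, ∀ i, 0 ≤ u n x i)
    (eps : ℕ → ℝ) (heps : ∀ n, eps n ∈ Set.Ioo (0 : ℝ) 1)
    (hepslim : Tendsto eps atTop (nhds 0))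
    (hgint : ∀ n, ∫⁻ x in Ω, ENNReal.ofReal (gSeq (A n) (m n) (u n) p x) < ⊤)
    (hmain : ∀ n,
      ∫⁻ x in Ω, ENNReal.ofReal (∑ i, u n x i * |fSeq (A n) (m n) (u n) x i| ^ p) ≤
        ENNReal.ofReal (eps n ^ 2) *
          ∫⁻ x in Ω, ENNReal.ofReal (gSeq (A n) (m n) (u n) p x)) :
    ∀ a : ℝ, 0 < a → ∃ C : ℝ, 0 < C ∧ ∀ᶠ n in atTop,
      volume {x ∈ Ω | a < gSeq (A n) (m n) (u n) p x} ≤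
        ENNReal.ofReal C * volume {x ∈ Ω | vSeq (A n) (m n) (u n) p x ≤ eps n} := by
  intro a ha
  obtain ⟨C, hC, hmeasure⟩ := measure_gn_gt_a_le_const_mul_measure_vn_le_eps_general (ι := Fin N)
    (X := Fin d → ℝ) (zero_le_one.trans hp) hκ (1 / κ) (1 / κ) ha one_half_lt_one
  refine ⟨C, hC, (hepslim.eventually_le_const one_half_pos).mono fun n hn => ?_⟩
  refine (hmeasure hΩo.measurableSet (fun i j => (hAmeas n i j).aemeasurable)
    (fun i => (hmmeas n i).aemeasurable) (fun i => (humeas n i).aemeasurable)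
    (fun x hx => (hadm n x hx).mem_uniformPMatrices) (fun x hx => (hadm n x hx).abs_le hκ.le)
    (hu0 n) (heps n).1 hn (hgint n).ne (hmain n)).trans ?_
  gcongr
  exact fun hx => vSeq_le_of_weightedPowSum_le hx.1 hx.2
end

section
/- Let Ω ⊂ ℝ^d be open, let f_1,…,f_N : Ω → ℝ and u_1,…,u_N : Ω → ℝ be continuous with u_i ≥ 0, and let σ > 0 and ε ∈ (0, σ] be such that the following condition holds: for every x ∈ Ω and every index i, if f_i(x) ≤ σ and u_i(x) ≤ σ, then there exists an index j with f_j(x) ≤ −σ. Then for every t ∈ (σ/2, σ), the boundary relative to Ω of the open set A(t) = ⋃_{i=1}^N {x ∈ Ω : |f_i(x)| > t} is contained in ⋂_{i=1}^N {x ∈ Ω : u_i(x) > ε}. -/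
section Superlevel

variable {X R : Type*} [TopologicalSpace X] {Ω : Set X}

theorem isOpen_superlevel_of_lowerSemicontinuousOn [Preorder R] {g : X → R} (hΩ : IsOpen Ω)
    (hg : LowerSemicontinuousOn g Ω) (t : R) : IsOpen {x ∈ Ω | t < g x} := by
  obtain ⟨U, hU, hΩU⟩ := lowerSemicontinuousOn_iff_preimage_Ioi.1 hg t
  change IsOpen (Ω ∩ g ⁻¹' Set.Ioi t)
  exact hΩU ▸ hΩ.inter hU

theorem le_of_mem_frontier_iUnion_superlevel [LinearOrder R] {ι : Sort*}
    {g : ι → X → R} (hΩ : IsOpen Ω) (hg : ∀ i, LowerSemicontinuousOn (g i) Ω) {t : R} {x : X}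
    (hxΩ : x ∈ Ω) (hx : x ∈ frontier (⋃ i, {x ∈ Ω | t < g i x})) (i : ι) : g i x ≤ t := by
  have hopen : IsOpen (⋃ i, {x ∈ Ω | t < g i x}) :=
    isOpen_iUnion fun i => isOpen_superlevel_of_lowerSemicontinuousOn hΩ (hg i) t
  have hx_notMem : x ∉ ⋃ i, {x ∈ Ω | t < g i x} :=
    (disjoint_frontier_iff_isOpen.2 hopen).notMem_of_mem_left hx
  exact not_lt.1 fun hlt => hx_notMem (Set.mem_iUnion.2 ⟨i, hxΩ, hlt⟩)

end Superlevel

theorem frontier_union_superlevel_subset_general {X R S : Type*} [TopologicalSpace X]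
    [AddCommGroup R] [LinearOrder R] [IsOrderedAddMonoid R] [LinearOrder S] {ι : Sort*}
    {Ω : Set X} (hΩ : IsOpen Ω) {f : ι → X → R} {u : ι → X → S}
    (hf : ∀ i, LowerSemicontinuousOn (fun x => |f i x|) Ω) {σ : R} {ε : S}
    (hcond : ∀ x ∈ Ω, ∀ i, f i x ≤ σ → u i x ≤ ε → ∃ j, f j x ≤ -σ) {t : R} (ht : t < σ) :
    Ω ∩ frontier (⋃ i, {x ∈ Ω | t < |f i x|}) ⊆ ⋂ i, {x ∈ Ω | ε < u i x} := by
  rintro x ⟨hxΩ, hx⟩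
  have habs (j : ι) : |f j x| < σ :=
    (le_of_mem_frontier_iUnion_superlevel hΩ hf hxΩ hx j).trans_lt ht
  refine Set.mem_iInter.2 fun i => ⟨hxΩ, not_le.1 fun hui => ?_⟩
  obtain ⟨j, hj⟩ := hcond x hxΩ i (lt_of_abs_lt (habs i)).le hui
  exact (neg_lt_of_abs_lt (habs j)).not_ge hj

/-- If for every `x ∈ Ω` and every `i`, `f_i(x) ≤ σ` and `u_i(x) ≤ σ` imply that some
`f_j(x) ≤ -σ`, then for `t ∈ (σ/2, σ)` the boundary relative to `Ω` of
`A(t) = ⋃_i {x ∈ Ω : |f_i(x)| > t}` is contained in `⋂_i {x ∈ Ω : u_i(x) > ε}`. -/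
theorem frontier_union_superlevel_subset {d N : ℕ} (Ω : Set (Fin d → ℝ)) (hΩ : IsOpen Ω)
    (f u : Fin N → (Fin d → ℝ) → ℝ)
    (hf : ∀ i, ContinuousOn (f i) Ω) (hu : ∀ i, ContinuousOn (u i) Ω)
    (hu0 : ∀ i, ∀ x ∈ Ω, 0 ≤ u i x)
    (σ ε : ℝ) (hσ : 0 < σ) (hε : ε ∈ Set.Ioc 0 σ)
    (hcond : ∀ x ∈ Ω, ∀ i, f i x ≤ σ → u i x ≤ σ → ∃ j, f j x ≤ -σ) :
    ∀ t ∈ Set.Ioo (σ / 2) σ,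
      Ω ∩ frontier (⋃ i, {x ∈ Ω | t < |f i x|}) ⊆ ⋂ i, {x ∈ Ω | ε < u i x} :=
  fun _ ht => frontier_union_superlevel_subset_general hΩ
    (fun i => (hf i).abs.lowerSemicontinuousOn)
    (fun x hx i hfi hui => hcond x hx i hfi (hui.trans hε.2)) ht.2
end

section
/- Let Ω ⊂ ℝ^d be open, let f_1,…,f_N : Ω → ℝ and u_1,…,u_N : Ω → ℝ be continuous with u_i ≥ 0, and let σ > 0 and ε ∈ (0, σ] be such that the following condition holds: for every x ∈ Ω and every index i, if f_i(x) ≤ σ and u_i(x) ≤ σ, then there exists an index j with f_j(x) ≤ −σ. For t ∈ (σ/2, σ) define A(t) = {x ∈ Ω : f_1(x) > t} ∪ ⋃_{i=1}^N {x ∈ Ω : f_i(x) < −t}. Then for every t ∈ (σ/2, σ): ∂_Ω A(t) ∩ ∂_Ω {x ∈ Ω : f_1(x) > t} ⊆ {x ∈ Ω : u_1(x) > ε}, and for every i ∈ {1,…,N}, ∂_Ω A(t) ∩ ∂_Ω {x ∈ Ω : f_i(x) < −t} ⊆ {x ∈ Ω : u_i(x) > ε}. -/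
/-!
`A(t)` is open, so a point `x ∈ Ω` of its frontier lies outside `A(t)`: hence `f_1(x) ≤ t < σ`
and `f_j(x) ≥ -t > -σ` for all `j`. The hypothesis then forces `u_i(x) > ε` for every `i` with
`f_i(x) ≤ σ`. This holds for `i = 1`, and for any `i` with `x` in the closure of `{f_i < -t}`,
where `f_i(x) ≤ -t`.
-/

section MixedLevelSet

variable {X ι α β : Type*}

theorem le_of_mem_closure_sep_lt [Preorder α] [TopologicalSpace X] [TopologicalSpace α]
    [OrderClosedTopology α] {s : Set X} {g : X → α} {b : α} {x : X}
    (hg : ContinuousWithinAt g s x) (hx : x ∈ closure {y ∈ s | g y < b}) : g x ≤ b :=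
  (hg.mono (Set.sep_subset _ _)).closure_le hx continuousWithinAt_const fun _ hy => hy.2.le

/-- The union of the strict superlevel set of `f i₀` above `a` and the strict sublevel sets of all
the `f i` below `b`, taken inside `Ω`. The set `A(t)` of the paper is the case `a = t`, `b = -t`;
independent levels make sense in an order without negation. -/
def mixedLevelSet [LT α] (Ω : Set X) (f : ι → X → α) (i₀ : ι) (a b : α) : Set X :=
  {x ∈ Ω | a < f i₀ x} ∪ ⋃ i, {x ∈ Ω | f i x < b}

variable [LinearOrder α] {Ω : Set X} {f : ι → X → α} {i₀ : ι} {a b : α} {x : X}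

theorem notMem_mixedLevelSet_iff (hx : x ∈ Ω) :
    x ∉ mixedLevelSet Ω f i₀ a b ↔ f i₀ x ≤ a ∧ ∀ i, b ≤ f i x := by
  simp [mixedLevelSet, hx]

variable [TopologicalSpace X] [TopologicalSpace α] [OrderClosedTopology α]

theorem isOpen_mixedLevelSet (hΩ : IsOpen Ω) (hf : ∀ i, ContinuousOn (f i) Ω) :
    IsOpen (mixedLevelSet Ω f i₀ a b) :=
  ((hf i₀).isOpen_inter_preimage hΩ isOpen_Ioi).union <|
    isOpen_iUnion fun i => (hf i).isOpen_inter_preimage hΩ isOpen_Iio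

theorem le_and_forall_le_of_mem_frontier_mixedLevelSet
    (hΩ : IsOpen Ω) (hf : ∀ i, ContinuousOn (f i) Ω) (hx : x ∈ Ω)
    (hfr : x ∈ frontier (mixedLevelSet Ω f i₀ a b)) :
    f i₀ x ≤ a ∧ ∀ i, b ≤ f i x := by
  rw [(isOpen_mixedLevelSet hΩ hf).frontier_eq] at hfr
  exact (notMem_mixedLevelSet_iff hx).1 hfr.2

theorem frontier_mixed_level_sets_subset_general [LinearOrder β] {u : ι → X → β} {σ τ : α} {ε : β}
    (hΩ : IsOpen Ω) (hf : ∀ i, ContinuousOn (f i) Ω)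
    (hcond : ∀ x ∈ Ω, ∀ i, f i x ≤ σ → u i x ≤ ε → ∃ j, f j x ≤ τ)
    (haσ : a ≤ σ) (hbσ : b ≤ σ) (hτb : τ < b) :
    ((Ω ∩ frontier (mixedLevelSet Ω f i₀ a b)) ∩ (Ω ∩ frontier {x ∈ Ω | a < f i₀ x}) ⊆
        {x ∈ Ω | ε < u i₀ x}) ∧
      ∀ i, (Ω ∩ frontier (mixedLevelSet Ω f i₀ a b)) ∩ (Ω ∩ frontier {x ∈ Ω | f i x < b}) ⊆
        {x ∈ Ω | ε < u i x} := by
  have lt_u : ∀ x ∈ Ω, (∀ j, b ≤ f j x) → ∀ i, f i x ≤ σ → ε < u i x := by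
    intro x hx hb i hi
    by_contra! hu
    obtain ⟨j, hj⟩ := hcond x hx i hi hu
    exact (hτb.trans_le (hb j)).not_ge hj
  constructor
  · rintro x ⟨⟨hx, hfr⟩, -⟩
    obtain ⟨ha, hb⟩ := le_and_forall_le_of_mem_frontier_mixedLevelSet hΩ hf hx hfr
    exact ⟨hx, lt_u x hx hb i₀ (ha.trans haσ)⟩
  · rintro i x ⟨⟨hx, hfr⟩, -, hfi⟩
    obtain ⟨-, hb⟩ := le_and_forall_le_of_mem_frontier_mixedLevelSet hΩ hf hx hfr
    have hi : f i x ≤ b := le_of_mem_closure_sep_lt (hf i x hx) (frontier_subset_closure hfi)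
    exact ⟨hx, lt_u x hx hb i (hi.trans hbσ)⟩

end MixedLevelSet

/-- If for every `x ∈ Ω` and every `i`, `f_i(x) ≤ σ` and `u_i(x) ≤ σ` imply that some
`f_j(x) ≤ -σ`, then for `t ∈ (σ/2, σ)` and
`A(t) = {x ∈ Ω : f_1(x) > t} ∪ ⋃_i {x ∈ Ω : f_i(x) < -t}` we have
`∂_Ω A(t) ∩ ∂_Ω {f_1 > t} ⊆ {u_1 > ε}` and `∂_Ω A(t) ∩ ∂_Ω {f_i < -t} ⊆ {u_i > ε}`
for every `i`. -/
theorem frontier_mixed_level_sets_subset {d N : ℕ} (hN : 0 < N)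
    (Ω : Set (Fin d → ℝ)) (hΩ : IsOpen Ω)
    (f u : Fin N → (Fin d → ℝ) → ℝ)
    (hf : ∀ i, ContinuousOn (f i) Ω) (hu : ∀ i, ContinuousOn (u i) Ω)
    (hu0 : ∀ i, ∀ x ∈ Ω, 0 ≤ u i x)
    (σ ε : ℝ) (hσ : 0 < σ) (hε : ε ∈ Set.Ioc 0 σ)
    (hcond : ∀ x ∈ Ω, ∀ i, f i x ≤ σ → u i x ≤ σ → ∃ j, f j x ≤ -σ) :
    ∀ t ∈ Set.Ioo (σ / 2) σ,
      ((Ω ∩ frontier ({x ∈ Ω | t < f ⟨0, hN⟩ x} ∪ ⋃ i, {x ∈ Ω | f i x < -t})) ∩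
          (Ω ∩ frontier {x ∈ Ω | t < f ⟨0, hN⟩ x}) ⊆ {x ∈ Ω | ε < u ⟨0, hN⟩ x}) ∧
      ∀ i : Fin N,
        (Ω ∩ frontier ({x ∈ Ω | t < f ⟨0, hN⟩ x} ∪ ⋃ k, {x ∈ Ω | f k x < -t})) ∩
          (Ω ∩ frontier {x ∈ Ω | f i x < -t}) ⊆ {x ∈ Ω | ε < u i x} := fun t ht =>
  frontier_mixed_level_sets_subset_general hΩ hf
    (fun x hx i hfi hui => hcond x hx i hfi (hui.trans hε.2))
    ht.2.le (by linarith [ht.1]) (neg_lt_neg ht.2)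
end

section
/- Let Ω ⊂ ℝ^d be a bounded open set of finite Lebesgue measure, and let (A, m) with A = (a_{ij}) ∈ C(Ω̄; M_N(ℝ)) and m ∈ C(Ω̄; ℝ^N) be admissible with constant κ at every point of Ω̄. For I ⊆ {1,…,N}, let u_I : Ω̄ → ℝ^N be the (pointwise unique) solution of u_{I,i}(x) = 0 (i ∈ I) and m_j(x) − Σ_k a_{jk}(x) u_{I,k}(x) = 0 (j ∉ I). Let (u_n) be a sequence of measurable functions Ω → ℝ^N, set f_{in}(x) = m_i(x) − Σ_j a_{ij}(x) u_{jn}(x), and fix I ⊆ {1,…,N}. Then the following are equivalent: (a) u_{in} → 0 in measure on Ω for every i ∈ I and f_{jn} → 0 in measure on Ω for every j ∉ I; (b) u_n → u_I in measure on Ω. -/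
/-!
Let `B(x)` be the matrix whose rows are those of the identity for indices in `I` and those of
`A(x)` otherwise. The components of `B u_n - B u_I` are `u_{in}` for `i ∈ I` and `-f_{jn}` for
`j ∉ I`, so (a) says that `B u_n → B u_I` in measure. This is equivalent to `u_n → u_I` in measure
because `‖B w‖` and `‖w‖` are uniformly comparable: the entries of `B`, hence those of its
adjugate, are bounded, and `det B`, the principal minor of `A` over the complement of `I`, is
at least `κ`, so that `κ ‖w‖ ≤ ‖det B • w‖ = ‖adj(B) (B w)‖`.
-/

open MeasureTheory Filter

section ConvergenceInMeasure

variable {α ι : Type*} [MeasurableSpace α] {μ : Measure α} {l : Filter ι}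

lemma tendstoInMeasure_of_dist_le_mul {E F : Type*} [PseudoMetricSpace E] [PseudoMetricSpace F]
    {f : ι → α → E} {g : α → E} {f' : ι → α → F} {g' : α → F} {C : ℝ}
    (h : TendstoInMeasure μ f l g)
    (hle : ∀ᵐ x ∂μ, ∀ k, dist (f' k x) (g' x) ≤ C * dist (f k x) (g x)) :
    TendstoInMeasure μ f' l g' := by
  rw [tendstoInMeasure_iff_dist] at h ⊢
  intro ε hε
  have hC : 0 < max C 1 := by positivity
  refine tendsto_nhds_bot_mono' (h (ε / max C 1) (by positivity)) fun k => measure_mono_ae ?_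
  filter_upwards [hle] with x hx (hεx : ε ≤ dist (f' k x) (g' x))
  refine (div_le_iff₀' hC).2 ?_
  calc ε ≤ C * dist (f k x) (g x) := hεx.trans (hx k)
    _ ≤ max C 1 * dist (f k x) (g x) := by gcongr; exact le_max_left C 1

lemma tendstoInMeasure_congr_dist {E F : Type*} [PseudoMetricSpace E] [PseudoMetricSpace F]
    {f : ι → α → E} {g : α → E} {f' : ι → α → F} {g' : α → F}
    (h : ∀ᵐ x ∂μ, ∀ k, dist (f k x) (g x) = dist (f' k x) (g' x)) :
    TendstoInMeasure μ f l g ↔ TendstoInMeasure μ f' l g' :=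
  ⟨fun hf => tendstoInMeasure_of_dist_le_mul (C := 1) hf <|
      h.mono fun x hx k => by rw [one_mul, hx k],
    fun hf' => tendstoInMeasure_of_dist_le_mul (C := 1) hf' <|
      h.mono fun x hx k => by rw [one_mul, hx k]⟩

lemma tendstoInMeasure_pi_iff {n : Type*} [Fintype n] {E : n → Type*}
    [∀ i, EDist (E i)] {f : ι → α → ∀ i, E i} {g : α → ∀ i, E i} :
    TendstoInMeasure μ f l g ↔
      ∀ i, TendstoInMeasure μ (fun k x => f k x i) l fun x => g x i := by
  refine ⟨fun h i ε hε => ?_, fun h ε hε => ?_⟩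
  · exact tendsto_nhds_bot_mono' (h ε hε) fun k =>
      measure_mono fun x hx => le_trans hx (edist_le_pi_edist (f k x) (g x) i)
  · have hsum : Tendsto (fun k => ∑ i, μ {x | ε ≤ edist (f k x i) (g x i)}) l (nhds 0) := by
      simpa using tendsto_finsetSum Finset.univ fun i _ => h i ε hε
    refine tendsto_nhds_bot_mono' hsum fun k =>
      (measure_mono fun x hx => ?_).trans (measure_iUnion_fintype_le μ _)
    obtain ⟨i, -, hi⟩ := (Finset.le_sup_iff hε).1 hx
    exact Set.mem_iUnion.2 ⟨i, hi⟩

end ConvergenceInMeasure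

section MatrixBounds

open scoped Matrix Nat

lemma norm_mulVec_le_of_norm_entry_le {m n R : Type*} [Fintype m] [Fintype n]
    [NonUnitalSeminormedRing R] {M : Matrix m n R} {C : ℝ} (hC : 0 ≤ C)
    (hM : ∀ i j, ‖M i j‖ ≤ C) (w : n → R) :
    ‖M *ᵥ w‖ ≤ Fintype.card n * C * ‖w‖ := by
  refine (pi_norm_le_iff_of_nonneg (by positivity)).2 fun i => ?_
  calc ‖∑ j, M i j * w j‖ ≤ ∑ j, ‖M i j * w j‖ := norm_sum_le _ _
    _ ≤ ∑ _j : n, C * ‖w‖ := by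
        gcongr with j
        exact norm_mul_le_of_le (hM i j) (norm_le_pi_norm w j)
    _ = Fintype.card n * C * ‖w‖ := by simp [mul_assoc]

variable {n 𝕜 : Type*} [Fintype n] [DecidableEq n] [NormedField 𝕜]

lemma norm_adjugate_apply_le {M : Matrix n n 𝕜} {C : ℝ} (hM : ∀ i j, ‖M i j‖ ≤ C) (i j : n) :
    ‖M.adjugate i j‖ ≤ (Fintype.card n)! * max C 1 ^ Fintype.card n := by
  have hrow : ∀ k l, ‖M.updateRow j (Pi.single i 1) k l‖ ≤ max C 1 := fun k l => by
    rw [Matrix.updateRow_apply, Pi.single_apply]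
    split_ifs <;> simp [hM]
  rw [Matrix.adjugate_apply, ← nsmul_eq_mul]
  exact Matrix.det_le (abv := NormedField.toAbsoluteValue 𝕜) hrow

lemma mul_norm_le_of_le_norm_det {M : Matrix n n 𝕜} {C κ : ℝ} (hM : ∀ i j, ‖M i j‖ ≤ C)
    (hdet : κ ≤ ‖M.det‖) (w : n → 𝕜) :
    κ * ‖w‖ ≤
      Fintype.card n * ((Fintype.card n)! * max C 1 ^ Fintype.card n) * ‖M *ᵥ w‖ :=
  calc κ * ‖w‖ ≤ ‖M.det‖ * ‖w‖ := by gcongr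
    _ = ‖M.adjugate *ᵥ (M *ᵥ w)‖ := by
        rw [Matrix.mulVec_mulVec, Matrix.adjugate_mul, Matrix.smul_mulVec, Matrix.one_mulVec,
          norm_smul]
    _ ≤ _ := norm_mulVec_le_of_norm_entry_le (by positivity) (norm_adjugate_apply_le hM) _

lemma tendstoInMeasure_mulVec_iff {α ι : Type*} [MeasurableSpace α] {μ : Measure α}
    {l : Filter ι} {B : α → Matrix n n 𝕜} {C κ : ℝ} (hκ : 0 < κ)
    (hB : ∀ᵐ x ∂μ, ∀ i j, ‖B x i j‖ ≤ C) (hdet : ∀ᵐ x ∂μ, κ ≤ ‖(B x).det‖)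
    {u : ι → α → n → 𝕜} {v : α → n → 𝕜} :
    TendstoInMeasure μ (fun k x => B x *ᵥ u k x) l (fun x => B x *ᵥ v x) ↔
      TendstoInMeasure μ u l v := by
  refine ⟨fun h => tendstoInMeasure_of_dist_le_mul
      (C := Fintype.card n * ((Fintype.card n)! * max C 1 ^ Fintype.card n) / κ) h ?_,
    fun h => tendstoInMeasure_of_dist_le_mul (C := Fintype.card n * |C|) h ?_⟩
  · filter_upwards [hB, hdet] with x hBx hdetx k
    rw [dist_eq_norm, dist_eq_norm, ← Matrix.mulVec_sub, div_mul_eq_mul_div, le_div_iff₀' hκ]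
    exact mul_norm_le_of_le_norm_det hBx hdetx _
  · filter_upwards [hB] with x hBx k
    rw [dist_eq_norm, dist_eq_norm, ← Matrix.mulVec_sub]
    exact norm_mulVec_le_of_norm_entry_le (abs_nonneg C)
      (fun i j => (hBx i j).trans (le_abs_self C)) _

end MatrixBounds

section MixedMatrix

open scoped Matrix

variable {n R : Type*} [DecidableEq n]

/-- The coefficient matrix of the system defining `u_I`: its rows in `I` are those of the
identity, the other rows are those of `A`. -/
def mixedMatrix [Zero R] [One R] (A : Matrix n n R) (I : Finset n) : Matrix n n R :=
  Matrix.of fun i => if i ∈ I then Pi.single i 1 else A i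

lemma mixedMatrix_row_of_mem [Zero R] [One R] (A : Matrix n n R) {I : Finset n} {i : n}
    (hi : i ∈ I) : mixedMatrix A I i = Pi.single i 1 :=
  if_pos hi

lemma mixedMatrix_row_of_notMem [Zero R] [One R] (A : Matrix n n R) {I : Finset n} {i : n}
    (hi : i ∉ I) : mixedMatrix A I i = A i :=
  if_neg hi

lemma norm_mixedMatrix_apply_le [SeminormedRing R] [NormOneClass R] {A : Matrix n n R} {C : ℝ}
    (hA : ∀ i j, ‖A i j‖ ≤ C) (I : Finset n) (i j : n) :
    ‖mixedMatrix A I i j‖ ≤ max C 1 := by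
  by_cases hi : i ∈ I
  · rw [mixedMatrix_row_of_mem A hi, Pi.single_apply]
    split_ifs <;> simp
  · rw [mixedMatrix_row_of_notMem A hi]
    exact le_max_of_le_left (hA i j)

variable [Fintype n]

lemma mixedMatrix_mulVec_of_mem [NonAssocSemiring R] (A : Matrix n n R) {I : Finset n} {i : n}
    (hi : i ∈ I) (w : n → R) : (mixedMatrix A I *ᵥ w) i = w i := by
  rw [Matrix.mulVec, mixedMatrix_row_of_mem A hi, single_one_dotProduct]

lemma mixedMatrix_mulVec_of_notMem [NonAssocSemiring R] (A : Matrix n n R) {I : Finset n} {i : n}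
    (hi : i ∉ I) (w : n → R) : (mixedMatrix A I *ᵥ w) i = (A *ᵥ w) i := by
  rw [Matrix.mulVec, mixedMatrix_row_of_notMem A hi, Matrix.mulVec]

lemma det_mixedMatrix [CommRing R] (A : Matrix n n R) (I : Finset n) :
    (mixedMatrix A I).det = (A.toSquareBlockProp (· ∉ I)).det := by
  have block_compl : (mixedMatrix A I).toSquareBlockProp (· ∉ I) =
      A.toSquareBlockProp (· ∉ I) := by
    ext i j
    exact congrFun (mixedMatrix_row_of_notMem A i.2) j
  have block_I : (mixedMatrix A I).toSquareBlockProp (fun i => ¬ i ∉ I) = 1 := by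
    ext i j
    simp [Matrix.toSquareBlockProp, mixedMatrix_row_of_mem A (not_not.1 i.2), Matrix.one_apply,
      Pi.single_apply, Subtype.ext_iff, eq_comm]
  rw [Matrix.twoBlockTriangular_det _ (· ∉ I), block_compl, block_I, Matrix.det_one, mul_one]
  intro i hi j hj
  rw [mixedMatrix_row_of_mem A (not_not.1 hi),
    Pi.single_eq_of_ne (ne_of_mem_of_not_mem (not_not.1 hi) hj).symm]

end MixedMatrix

lemma minorP_compl {N : ℕ} (A : Matrix (Fin N) (Fin N) ℝ) (I : Finset (Fin N)) :
    minorP A Iᶜ = (A.toSquareBlockProp (· ∉ I)).det := by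
  rw [minorP, ← Matrix.det_submatrix_equiv_self (Equiv.subtypeEquivRight fun i : Fin N =>
    Finset.mem_compl (s := I) (a := i)) (A.toSquareBlockProp (· ∉ I))]
  rfl

open scoped Matrix in
theorem tendstoInMeasure_components_iff_tendsto_uI_general {α ι n 𝕜 : Type*} [MeasurableSpace α]
    {μ : Measure α} {l : Filter ι} [Fintype n] [DecidableEq n] [NormedField 𝕜] {C κ : ℝ}
    (hκ : 0 < κ) {A : α → Matrix n n 𝕜} {m : α → n → 𝕜} {I : Finset n}
    (hA : ∀ᵐ x ∂μ, ∀ i j, ‖A x i j‖ ≤ C)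
    (hdet : ∀ᵐ x ∂μ, κ ≤ ‖((A x).toSquareBlockProp (· ∉ I)).det‖) {uI : α → n → 𝕜}
    (huI : ∀ᵐ x ∂μ, (∀ i ∈ I, uI x i = 0) ∧ ∀ j ∉ I, m x j - ∑ k, A x j k * uI x k = 0)
    (u : ι → α → n → 𝕜) :
    ((∀ i ∈ I, TendstoInMeasure μ (fun k x => u k x i) l fun _ => 0) ∧
      (∀ j ∉ I, TendstoInMeasure μ (fun k x => m x j - ∑ i, A x j i * u k x i) l fun _ => 0)) ↔
    TendstoInMeasure μ u l uI := by
  have hB : ∀ᵐ x ∂μ, ∀ i j, ‖mixedMatrix (A x) I i j‖ ≤ max C 1 :=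
    hA.mono fun x hx => norm_mixedMatrix_apply_le hx I
  simp only [← det_mixedMatrix] at hdet
  rw [← tendstoInMeasure_mulVec_iff hκ hB hdet, tendstoInMeasure_pi_iff]
  have component_mem : ∀ i ∈ I, TendstoInMeasure μ (fun k x => u k x i) l (fun _ => 0) ↔
      TendstoInMeasure μ (fun k x => (mixedMatrix (A x) I *ᵥ u k x) i) l
        fun x => (mixedMatrix (A x) I *ᵥ uI x) i := fun i hi =>
    tendstoInMeasure_congr_dist <| huI.mono fun x hx k => by
      simp only [mixedMatrix_mulVec_of_mem _ hi, hx.1 i hi]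
  have component_notMem : ∀ j ∉ I,
      TendstoInMeasure μ (fun k x => m x j - ∑ i, A x j i * u k x i) l (fun _ => 0) ↔
      TendstoInMeasure μ (fun k x => (mixedMatrix (A x) I *ᵥ u k x) j) l
        fun x => (mixedMatrix (A x) I *ᵥ uI x) j := fun j hj =>
    tendstoInMeasure_congr_dist <| huI.mono fun x hx k => by
      have hm : m x j = (A x *ᵥ uI x) j := sub_eq_zero.1 (hx.2 j hj)
      rw [mixedMatrix_mulVec_of_notMem _ hj, mixedMatrix_mulVec_of_notMem _ hj, ← hm,
        dist_zero_right, dist_comm, dist_eq_norm]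
      rfl
  rw [forall₂_congr component_mem, forall₂_congr component_notMem, ← forall_and]
  exact forall_congr' fun i => by tauto

/-- For continuous admissible coefficients on `Ω̄` and `u_I` the pointwise solution of
`u_i = 0 (i ∈ I)`, `f_j(u) = 0 (j ∉ I)`, a sequence of measurable functions `u_n`
satisfies `u_{in} → 0` in measure for `i ∈ I` and `f_{jn} → 0` in measure for `j ∉ I`
if and only if `u_n → u_I` in measure. -/
theorem tendstoInMeasure_components_iff_tendsto_uI {d N : ℕ} (hN : 0 < N)
    (κ : ℝ) (hκ : 0 < κ)
    (Ω : Set (Fin d → ℝ)) (hΩo : IsOpen Ω) (hΩb : Bornology.IsBounded Ω)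
    (a : Fin N → Fin N → (Fin d → ℝ) → ℝ) (m : Fin N → (Fin d → ℝ) → ℝ)
    (ha : ∀ i j, ContinuousOn (a i j) (closure Ω))
    (hm : ∀ i, ContinuousOn (m i) (closure Ω))
    (hadm : ∀ x ∈ closure Ω, IsAdmissible κ (Matrix.of fun i j => a i j x) fun i => m i x)
    (I : Finset (Fin N)) (uI : (Fin d → ℝ) → Fin N → ℝ)
    (huI : ∀ x ∈ closure Ω,
      (∀ i ∈ I, uI x i = 0) ∧ ∀ j ∉ I, m j x - ∑ k, a j k x * uI x k = 0)
    (u : ℕ → (Fin d → ℝ) → Fin N → ℝ) (humeas : ∀ n, Measurable (u n)) :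
    ((∀ i ∈ I, TendstoInMeasure (volume.restrict Ω)
        (fun n x => u n x i) atTop fun _ => 0) ∧
      (∀ j ∉ I, TendstoInMeasure (volume.restrict Ω)
        (fun n x => m j x - ∑ k, a j k x * u n x k) atTop fun _ => 0)) ↔
    TendstoInMeasure (volume.restrict Ω) u atTop uI := by
  have hΩ : ∀ᵐ x ∂volume.restrict Ω, x ∈ closure Ω :=
    (ae_restrict_mem hΩo.measurableSet).mono fun _ hx => subset_closure hx
  exact tendstoInMeasure_components_iff_tendsto_uI_general hκ
    (A := fun x => Matrix.of fun i j => a i j x) (m := fun x i => m i x)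
    (hΩ.mono fun x hx => (hadm x hx).1)
    (hΩ.mono fun x hx => (((hadm x hx).2.2.1 Iᶜ).trans_eq (minorP_compl _ I)).trans
      (le_abs_self _))
    (hΩ.mono huI) u
end
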